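/- arXiv:2307.02517 — 2 statements merged into one kernel-verified Lean document; each statement's English description precedes it below -/
import Mathlib

section
/- There exists an absolute constant C > 0 such that for every finite connected graph G with at least two vertices, η(G) ≤ C · ζ(G). -/
open SimpleGraph

/-- The vertex type of the `m`-subdivision of a simple graph `G`:
branch vertices (`Sum.inl`) together with, for each edge (oriented from its
smaller to its larger endpoint) and each `i : Fin (m-1)`, the internal vertex
of the corresponding thread at distance `i+1` from the smaller endpoint. -/
abbrev SubVert (V : Type*) [LinearOrder V] (G : SimpleGraph V) (m : ℕ) : Type _ :=
  V ⊕ ({e : V × V // G.Adj e.1 e.2 ∧ e.1 < e.2} × Fin (m - 1))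

/-- Basic adjacency generating relation for the `m`-subdivision. -/
def subPre {V : Type*} [LinearOrder V] (G : SimpleGraph V) (m : ℕ) :
    SubVert V G m → SubVert V G m → Prop
  | Sum.inl u, Sum.inl v => m = 1 ∧ G.Adj u v
  | Sum.inl u, Sum.inr ei => (u = ei.1.1.1 ∧ (ei.2 : ℕ) = 0) ∨ (u = ei.1.1.2 ∧ (ei.2 : ℕ) + 2 = m)
  | Sum.inr ei, Sum.inr ej => ei.1 = ej.1 ∧ (ei.2 : ℕ) + 1 = (ej.2 : ℕ)
  | Sum.inr _, Sum.inl _ => False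

/-- The `m`-subdivision `G^{1/m}` of `G`: every edge of `G` is replaced by a
path (thread) of length `m`. -/
def Subdiv {V : Type*} [LinearOrder V] (G : SimpleGraph V) (m : ℕ) :
    SimpleGraph (SubVert V G m) :=
  SimpleGraph.fromRel (subPre G m)

/-- The vertex of `G^{1/m}` lying on the thread replacing the edge `{w₁, w₂}`
at distance `x` along the thread from `w₁` (for `0 ≤ x ≤ m`). -/
def threadVert {V : Type*} [LinearOrder V] (G : SimpleGraph V) (m : ℕ) (w₁ w₂ : V)
    (h : G.Adj w₁ w₂) (x : ℕ) : SubVert V G m :=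
  if hx0 : x = 0 then Sum.inl w₁
  else if hxm : m ≤ x then Sum.inl w₂
  else if hlt : w₁ < w₂ then
    Sum.inr (⟨(w₁, w₂), h, hlt⟩, ⟨x - 1, by omega⟩)
  else
    Sum.inr (⟨(w₂, w₁), h.symm, lt_of_le_of_ne (not_lt.mp hlt) h.ne'⟩, ⟨m - x - 1, by omega⟩)

/-- A vertex of `G^{1/m}` lies on the thread replacing the edge `{w₁, w₂}`. -/
def OnThread {V : Type*} [LinearOrder V] (G : SimpleGraph V) (m : ℕ) (w₁ w₂ : V)
    (h : G.Adj w₁ w₂) (v : SubVert V G m) : Prop :=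
  ∃ x ≤ m, v = threadVert G m w₁ w₂ h x
/-- A robber trajectory: at each time step the robber stays put or moves
to an adjacent vertex. -/
def ValidTraj {V : Type*} (G : SimpleGraph V) (r : ℕ → V) : Prop :=
  ∀ t, r (t + 1) = r t ∨ G.Adj (r t) (r (t + 1))

/-- A deterministic cop strategy for `k` cops: a function from the list of
probe results of all previous rounds (each round's results being the `k`
probed distances) to the `k` vertices probed in the current round. -/
abbrev CopStrategy (V : Type*) (k : ℕ) := List (Fin k → ℕ) → (Fin k → V)

/-- The history of probe results after `t` rounds, when strategy `A` plays
against the robber trajectory `r`. -/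
noncomputable def probeHist {V : Type*} (G : SimpleGraph V) {k : ℕ} (A : CopStrategy V k)
    (r : ℕ → V) : ℕ → List (Fin k → ℕ)
  | 0 => []
  | t + 1 => probeHist G A r t ++ [fun i => G.dist (A (probeHist G A r t) i) (r t)]

/-- The set of robber positions consistent with all probe results received
through round `t` (inclusive), when `A` plays against trajectory `r`. -/
def RSet {V : Type*} (G : SimpleGraph V) {k : ℕ} (A : CopStrategy V k)
    (r : ℕ → V) (t : ℕ) : Set V :=
  {w | ∃ r', ValidTraj G r' ∧ probeHist G A r' (t + 1) = probeHist G A r (t + 1) ∧ r' t = w}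

/-- A cop strategy is winning if against every robber trajectory, after
finitely many rounds the consistent set becomes a singleton. -/
def CopWinning {V : Type*} (G : SimpleGraph V) {k : ℕ} (A : CopStrategy V k) : Prop :=
  ∀ r : ℕ → V, ValidTraj G r → ∃ t, RSet G A r t = {r t}

/-- `G` is localizable with `k` cops. -/
def Localizable {V : Type*} (G : SimpleGraph V) (k : ℕ) : Prop :=
  ∃ A : CopStrategy V k, CopWinning G A

/-- The localization number `ζ(G)`. -/
noncomputable def locNum {V : Type*} (G : SimpleGraph V) : ℕ :=
  sInf {k | Localizable G k}

/-- The subdivision number `η(G)`: the least `m ≥ 1` such that `G^{1/m}` is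
localizable with one cop. -/
noncomputable def subdivNum {V : Type*} [LinearOrder V] (G : SimpleGraph V) : ℕ :=
  sInf {m | 1 ≤ m ∧ Localizable (Subdiv G m) 1}

/-- The capture time: the least `T` such that some strategy with `k` cops is
guaranteed to locate the robber within `T` rounds. -/
noncomputable def captTime {V : Type*} (G : SimpleGraph V) (k : ℕ) : ℕ :=
  sInf {T | ∃ A : CopStrategy V k, ∀ r : ℕ → V, ValidTraj G r → ∃ t < T, RSet G A r t = {r t}}

/-- The node set of the cop strategy graph `H_A` of a strategy `A`: all game
states (identified with the information available to the cops, i.e. the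
history of probe results) reachable under `A` along some robber trajectory
without passing beyond a terminating state. -/
def StrategyStates {V : Type*} (G : SimpleGraph V) {k : ℕ} (A : CopStrategy V k) :
    Set (List (Fin k → ℕ)) :=
  {h | ∃ r t, ValidTraj G r ∧ h = probeHist G A r t ∧
    ∀ s, s + 1 < t → RSet G A r s ≠ {r s}}

/-! ### Set-based reformulation of the game -/

/-- Closed neighbourhood of a set. -/
def nbhd {V : Type*} (G : SimpleGraph V) (X : Set V) : Set V :=
  {z | ∃ z₀ ∈ X, z = z₀ ∨ G.Adj z₀ z}

/-- The part of `S` consistent with answer `a` to probe `p`. -/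
def cls {V : Type*} (G : SimpleGraph V) {k : ℕ} (S : Set V) (p : Fin k → V) (a : Fin k → ℕ) :
    Set V := {v | v ∈ S ∧ ∀ i, G.dist (p i) v = a i}

/-- Cops win from candidate set `S` (before probing). -/
inductive Win {V : Type*} (G : SimpleGraph V) (k : ℕ) : Set V → Prop
  | mk (S : Set V) (p : Fin k → V)
      (h : ∀ a : Fin k → ℕ, ¬ (cls G S p a).Subsingleton → Win G k (nbhd G (cls G S p a))) :
      Win G k S

theorem nbhd_mono {V : Type*} (G : SimpleGraph V) {X Y : Set V} (h : X ⊆ Y) :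
    nbhd G X ⊆ nbhd G Y := by
  rintro z ⟨z₀, h₀, h₁⟩
  exact ⟨z₀, h h₀, h₁⟩

theorem Win.mono {V : Type*} {G : SimpleGraph V} {k : ℕ} {S : Set V} (h : Win G k S) :
    ∀ {T : Set V}, T ⊆ S → Win G k T := by
  induction h with
  | mk S p h ih =>
    intro T hT
    refine Win.mk T p (fun a ha => ?_)
    have hsub : cls G T p a ⊆ cls G S p a := fun v hv => ⟨hT hv.1, hv.2⟩
    exact ih a (fun hs => ha (hs.anti hsub)) (nbhd_mono G hsub)

theorem probeHist_cons {V : Type*} (G : SimpleGraph V) {k : ℕ} (p : Fin k → V)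
    (F : (Fin k → ℕ) → CopStrategy V k) (A : CopStrategy V k) (h0 : A [] = p)
    (h1 : ∀ a l, A (a :: l) = F a l) (r : ℕ → V) (t : ℕ) :
    probeHist G A r (t + 1) = (fun i => G.dist (p i) (r 0)) ::
      probeHist G (F (fun i => G.dist (p i) (r 0))) (fun s => r (s + 1)) t := by
  induction t with
  | zero => simp [probeHist, h0]
  | succ t ih =>
    rw [probeHist, ih, h1]
    simp [probeHist]

theorem Win.exists_strategy {V : Type*} {G : SimpleGraph V} {k : ℕ} {S : Set V}
    (h : Win G k S) : ∃ A : CopStrategy V k, ∀ r, ValidTraj G r → r 0 ∈ S →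
      ∃ t, ∀ r', ValidTraj G r' → r' 0 ∈ S →
        probeHist G A r' (t + 1) = probeHist G A r (t + 1) → r' t = r t := by
  induction h with
  | mk S p h ih =>
    have key : ∀ a : Fin k → ℕ, ∃ A : CopStrategy V k, ¬ (cls G S p a).Subsingleton →
        ∀ r, ValidTraj G r → r 0 ∈ nbhd G (cls G S p a) →
        ∃ t, ∀ r', ValidTraj G r' → r' 0 ∈ nbhd G (cls G S p a) →
        probeHist G A r' (t + 1) = probeHist G A r (t + 1) → r' t = r t := by
      intro a
      by_cases ha : (cls G S p a).Subsingleton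
      · exact ⟨fun _ => p, fun h => absurd ha h⟩
      · obtain ⟨A, hA⟩ := ih a ha
        exact ⟨A, fun _ => hA⟩
    choose F hF using key
    let A : CopStrategy V k := fun l => match l with
      | [] => p
      | a :: l => F a l
    have hcons := probeHist_cons G p F A rfl (fun _ _ => rfl)
    refine ⟨A, fun r hr hr0 => ?_⟩
    have hmem : ∀ r' : ℕ → V, r' 0 ∈ S →
        (fun i => G.dist (p i) (r' 0)) = (fun i => G.dist (p i) (r 0)) →
        r' 0 ∈ cls G S p (fun i => G.dist (p i) (r 0)) := by
      intro r' h0 h1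
      exact ⟨h0, fun i => congrFun h1 i⟩
    have hshift : ∀ r', ValidTraj G r' → r' 0 ∈ S →
        (fun i => G.dist (p i) (r' 0)) = (fun i => G.dist (p i) (r 0)) →
        r' (0 + 1) ∈ nbhd G (cls G S p (fun i => G.dist (p i) (r 0))) := by
      intro r' hv h0 h1
      exact ⟨r' 0, hmem r' h0 h1, hv 0⟩
    by_cases hs : (cls G S p (fun i => G.dist (p i) (r 0))).Subsingleton
    · refine ⟨0, fun r' hr' hr'0 he => ?_⟩
      rw [hcons, hcons] at he
      simp only [List.cons.injEq] at he
      exact hs (hmem r' hr'0 he.1) (hmem r hr0 rfl)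
    · obtain ⟨t, ht⟩ := hF _ hs (fun s => r (s + 1)) (fun s => hr (s + 1)) (hshift r hr hr0 rfl)
      refine ⟨t + 1, fun r' hr' hr'0 he => ?_⟩
      rw [hcons, hcons] at he
      simp only [List.cons.injEq] at he
      obtain ⟨he1, he2⟩ := he
      rw [he1] at he2
      exact ht (fun s => r' (s + 1)) (fun s => hr' (s + 1)) (hshift r' hr' hr'0 he1) he2

theorem Win.localizable {V : Type*} {G : SimpleGraph V} {k : ℕ} (h : Win G k Set.univ) :
    Localizable G k := by
  obtain ⟨A, hA⟩ := h.exists_strategy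
  refine ⟨A, fun r hr => ?_⟩
  obtain ⟨t, ht⟩ := hA r hr trivial
  refine ⟨t, Set.Subset.antisymm ?_ ?_⟩
  · rintro w ⟨r', hr', he, rfl⟩
    exact ht r' hr' trivial he
  · rintro w rfl
    exact ⟨r, hr, rfl, rfl⟩

theorem probeHist_congr {V : Type*} (G : SimpleGraph V) {k : ℕ} (A : CopStrategy V k)
    (r r' : ℕ → V) (t : ℕ) (h : ∀ s < t, r s = r' s) :
    probeHist G A r t = probeHist G A r' t := by
  induction t with
  | zero => rfl
  | succ t ih =>
    rw [probeHist, probeHist, ih (fun s hs => h s (by omega)), h t (by omega)]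

theorem win_of_localizable {V : Type*} [Finite V] {G : SimpleGraph V} {k : ℕ}
    (h : Localizable G k) : Win G k Set.univ := by
  classical
  obtain ⟨A, hA⟩ := h
  by_contra hno
  have step : ∀ (S : Set V) (p : Fin k → V), ¬ Win G k S → ∃ a : Fin k → ℕ,
      ¬ (cls G S p a).Subsingleton ∧ ¬ Win G k (nbhd G (cls G S p a)) := by
    intro S p hS
    by_contra hc
    exact hS (Win.mk S p (fun a ha => by_contra fun hw => hc ⟨a, ha, hw⟩))
  choose! f hf using step
  -- the adversary's sequence of histories and candidate sets
  let st : ℕ → List (Fin k → ℕ) × Set V := fun t => Nat.rec ([], Set.univ)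
    (fun _ q => (q.1 ++ [f q.2 (A q.1)], nbhd G (cls G q.2 (A q.1) (f q.2 (A q.1))))) t
  have st0 : st 0 = ([], Set.univ) := rfl
  have stS : ∀ t, st (t + 1) = ((st t).1 ++ [f (st t).2 (A (st t).1)],
    nbhd G (cls G (st t).2 (A (st t).1) (f (st t).2 (A (st t).1)))) := fun _ => rfl
  let B : ℕ → Set V := fun t => cls G (st t).2 (A (st t).1) (f (st t).2 (A (st t).1))
  have hwin : ∀ t, ¬ Win G k (st t).2 := by
    intro t
    induction t with
    | zero => exact hno
    | succ t ih => rw [stS]; exact (hf _ _ ih).2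
  have hB : ∀ t, ¬ (B t).Subsingleton := fun t => (hf _ _ (hwin t)).1
  have htraj0 : ∀ t, ∀ w ∈ (st t).2, ∃ r, ValidTraj G r ∧ probeHist G A r t = (st t).1 ∧
      ∀ s, t ≤ s → r s = w := by
    intro t
    induction t with
    | zero =>
      intro w _
      exact ⟨fun _ => w, fun _ => Or.inl rfl, rfl, fun _ _ => rfl⟩
    | succ t ih =>
      intro w hw
      rw [stS] at hw
      obtain ⟨u, hu, huw⟩ := hw
      obtain ⟨r, hr, hh, hc⟩ := ih u hu.1
      refine ⟨fun s => if s ≤ t then r s else w, ?_, ?_, ?_⟩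
      · intro s
        by_cases h1 : s + 1 ≤ t
        · have h2 : s ≤ t := by omega
          simpa [h1, h2] using hr s
        · by_cases h2 : s ≤ t
          · have h3 : s = t := by omega
            subst h3
            simpa [hc s le_rfl] using huw
          · simp [h1, h2]
      · have e1 : probeHist G A (fun s => if s ≤ t then r s else w) t = (st t).1 := by
          rw [← hh]
          exact probeHist_congr G A _ _ t (fun s hs => by simp [hs.le])
        rw [probeHist, e1, stS]
        simp only [le_refl, if_true, hc t le_rfl, List.append_cancel_left_eq, List.cons.injEq,
          and_true]
        funext i
        exact hu.2 i
      · intro s hs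
        have : ¬ s ≤ t := by omega
        simp [this]
  have htraj : ∀ t, ∀ w ∈ B t, ∃ r, ValidTraj G r ∧ probeHist G A r (t + 1) = (st (t + 1)).1 ∧
      r t = w := by
    intro t w hw
    obtain ⟨r, hr, hh, hc⟩ := htraj0 t w hw.1
    refine ⟨r, hr, ?_, hc t le_rfl⟩
    rw [probeHist, hh, stS, hc t le_rfl]
    simp only [List.append_cancel_left_eq, List.cons.injEq, and_true]
    funext i
    exact hw.2 i
  -- compactness
  obtain ⟨r, hr, hrh⟩ : ∃ r, ValidTraj G r ∧ ∀ t, probeHist G A r t = (st t).1 := by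
    let _ : TopologicalSpace V := ⊥
    have : DiscreteTopology V := ⟨rfl⟩
    let _ : TopologicalSpace (List (Fin k → ℕ)) := ⊥
    have : DiscreteTopology (List (Fin k → ℕ)) := ⟨rfl⟩
    have hcont : ∀ t, Continuous (fun r : ℕ → V => probeHist G A r t) := by
      intro t
      induction t with
      | zero => exact continuous_const
      | succ t ih =>
        have h1 : Continuous (fun q : List (Fin k → ℕ) × V =>
            q.1 ++ [fun i => G.dist (A q.1 i) q.2]) := continuous_of_discreteTopology
        exact h1.comp (ih.prodMk (continuous_apply t))
    have hvc : IsClosed {r : ℕ → V | ValidTraj G r} := by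
      have : {r : ℕ → V | ValidTraj G r} =
          ⋂ t, (fun r : ℕ → V => (r t, r (t + 1))) ⁻¹' {q | q.2 = q.1 ∨ G.Adj q.1 q.2} := by
        ext r; simp [ValidTraj]
      rw [this]
      exact isClosed_iInter (fun t => (isClosed_discrete _).preimage
        ((continuous_apply t).prodMk (continuous_apply (t + 1))))
    let K : ℕ → Set (ℕ → V) := fun t => {r | ValidTraj G r} ∩
      (fun r => probeHist G A r t) ⁻¹' {(st t).1}
    have hKc : ∀ t, IsClosed (K t) := fun t =>
      hvc.inter ((isClosed_discrete _).preimage (hcont t))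
    have := IsCompact.nonempty_iInter_of_sequence_nonempty_isCompact_isClosed K
      (by
        rintro t r ⟨h1, h2⟩
        refine ⟨h1, ?_⟩
        simp only [Set.mem_preimage, Set.mem_singleton_iff] at h2 ⊢
        rw [probeHist, stS] at h2
        exact (List.append_inj' h2 rfl).1)
      (by
        intro t
        obtain ⟨w, hw⟩ : (B t).Nonempty := by
          by_contra hne
          rw [Set.not_nonempty_iff_eq_empty] at hne
          exact hB t (hne ▸ Set.subsingleton_empty)
        obtain ⟨r, hr, hh, _⟩ := htraj0 t w hw.1
        exact ⟨r, hr, hh⟩)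
      (hKc 0).isCompact hKc
    obtain ⟨r, hr⟩ := this
    rw [Set.mem_iInter] at hr
    exact ⟨r, (hr 0).1, fun t => (hr t).2⟩
  obtain ⟨t, ht⟩ := hA r hr
  apply hB t
  have hsub : B t ⊆ RSet G A r t := by
    intro w hw
    obtain ⟨r', hr', hh, he⟩ := htraj t w hw
    exact ⟨r', hr', hh.trans (hrh (t + 1)).symm, he⟩
  rw [ht] at hsub
  exact Set.subsingleton_singleton.anti hsub

/-! ### Geometry of the subdivision -/

section Geometry

variable {V : Type*} [LinearOrder V] {G : SimpleGraph V} {m : ℕ}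

theorem tv_zero (u v : V) (h : G.Adj u v) : threadVert G m u v h 0 = Sum.inl u := by
  simp [threadVert]

theorem tv_end (hm : 0 < m) (u v : V) (h : G.Adj u v) :
    threadVert G m u v h m = Sum.inl v := by
  simp [threadVert, hm.ne']

theorem tv_symm (hm : 0 < m) (u v : V) (h : G.Adj u v) (x : ℕ) (hx : x ≤ m) :
    threadVert G m u v h x = threadVert G m v u h.symm (m - x) := by
  rcases Nat.eq_zero_or_pos x with rfl | h0
  · rw [tv_zero, Nat.sub_zero, tv_end hm]
  rcases Nat.lt_or_ge x m with h1 | h1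
  · unfold threadVert
    rw [dif_neg (show ¬ x = 0 by omega), dif_neg (show ¬ m ≤ x by omega),
      dif_neg (show ¬ m - x = 0 by omega), dif_neg (show ¬ m ≤ m - x by omega)]
    rcases lt_or_gt_of_ne h.ne with h2 | h2
    · rw [dif_pos h2, dif_neg (not_lt.mpr h2.le)]
      congr 3
      omega
    · rw [dif_neg (not_lt.mpr h2.le), dif_pos h2]
  · obtain rfl : x = m := le_antisymm hx h1
    rw [tv_end hm, Nat.sub_self, tv_zero]

theorem tv_of_lt (u v : V) (h : G.Adj u v) (hlt : u < v) (x : ℕ) (h0 : 0 < x) (h1 : x < m) :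
    threadVert G m u v h x = Sum.inr (⟨(u, v), h, hlt⟩, ⟨x - 1, by omega⟩) := by
  unfold threadVert
  rw [dif_neg (by omega), dif_neg (by omega), dif_pos hlt]

/-- Internal thread positions determine the thread and the position. -/
theorem tv_inj (u v : V) (h : G.Adj u v) (x : ℕ) (h0 : 0 < x) (h1 : x < m)
    (u' v' : V) (h' : G.Adj u' v') (x' : ℕ) (hx' : x' ≤ m)
    (he : threadVert G m u v h x = threadVert G m u' v' h' x') :
    (u = u' ∧ v = v' ∧ x = x') ∨ (u = v' ∧ v = u' ∧ x + x' = m) := by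
  have hm : 0 < m := by omega
  have main : ∀ (u v : V) (h : G.Adj u v) (x : ℕ) (h0 : 0 < x) (h1 : x < m) (hlt : u < v)
    (u' v' : V) (h' : G.Adj u' v') (x' : ℕ) (hx' : x' ≤ m) (hlt' : u' < v')
    (he : threadVert G m u v h x = threadVert G m u' v' h' x'),
    u = u' ∧ v = v' ∧ x = x' := by
    intro u v h x h0 h1 hlt u' v' h' x' hx' hlt' he
    rw [tv_of_lt u v h hlt x h0 h1] at he
    rcases Nat.eq_zero_or_pos x' with rfl | h0'
    · rw [tv_zero] at he; cases he
    rcases Nat.lt_or_ge x' m with h1' | h1'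
    · rw [tv_of_lt u' v' h' hlt' x' h0' h1'] at he
      simp only [Sum.inr.injEq, Prod.mk.injEq, Subtype.mk.injEq, Fin.mk.injEq] at he
      exact ⟨he.1.1, he.1.2, by omega⟩
    · obtain rfl : x' = m := le_antisymm hx' h1'
      rw [tv_end hm] at he; cases he
  rcases lt_or_gt_of_ne h.ne with h2 | h2 <;> rcases lt_or_gt_of_ne h'.ne with h3 | h3
  · exact Or.inl (main u v h x h0 h1 h2 u' v' h' x' hx' h3 he)
  · rw [tv_symm hm u' v' h' x' hx'] at he
    have := main u v h x h0 h1 h2 v' u' h'.symm (m - x') (by omega) h3 he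
    exact Or.inr ⟨this.1, this.2.1, by omega⟩
  · rw [tv_symm hm u v h x h1.le] at he
    have := main v u h.symm (m - x) (by omega) (by omega) h2 u' v' h' x' hx' h3 he
    exact Or.inr ⟨this.2.1, this.1, by omega⟩
  · rw [tv_symm hm u v h x h1.le, tv_symm hm u' v' h' x' hx'] at he
    have := main v u h.symm (m - x) (by omega) (by omega) h2 v' u' h'.symm (m - x')
      (by omega) h3 he
    exact Or.inl ⟨this.2.1, this.1, by omega⟩

theorem tv_eq_inl (w : V) (u' v' : V) (h' : G.Adj u' v') (x' : ℕ) (hx' : x' < m)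
    (he : Sum.inl w = threadVert G m u' v' h' x') : x' = 0 ∧ u' = w := by
  rcases Nat.eq_zero_or_pos x' with rfl | h0'
  · rw [tv_zero] at he
    exact ⟨rfl, (Sum.inl.inj he).symm⟩
  · unfold threadVert at he
    rw [dif_neg (by omega), dif_neg (by omega)] at he
    split at he <;> cases he

theorem tv_adj (hm : 2 ≤ m) (u v : V) (h : G.Adj u v) (x : ℕ) (hx : x < m) :
    (Subdiv G m).Adj (threadVert G m u v h x) (threadVert G m u v h (x + 1)) := by
  have main : ∀ (u v : V) (h : G.Adj u v) (hlt : u < v) (x : ℕ) (hx : x < m),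
      (Subdiv G m).Adj (threadVert G m u v h x) (threadVert G m u v h (x + 1)) := by
    intro u v h hlt x hx
    rcases Nat.eq_zero_or_pos x with rfl | h0
    · rw [tv_zero, tv_of_lt u v h hlt (0 + 1) (by omega) (by omega)]
      simp [Subdiv, subPre]
    · rcases Nat.lt_or_ge (x + 1) m with h1 | h1
      · rw [tv_of_lt u v h hlt x h0 hx, tv_of_lt u v h hlt (x + 1) (by omega) h1]
        simp only [Subdiv, SimpleGraph.fromRel_adj, subPre]
        refine ⟨?_, Or.inl ⟨trivial, ?_⟩⟩
        · simp; omega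
        · omega
      · have : x + 1 = m := by omega
        rw [this, tv_of_lt u v h hlt x h0 hx, tv_end (by omega)]
        simp only [Subdiv, SimpleGraph.fromRel_adj, subPre]
        refine ⟨by simp, Or.inr (Or.inr ⟨trivial, ?_⟩)⟩
        omega
  rcases lt_or_gt_of_ne h.ne with h2 | h2
  · exact main u v h h2 x hx
  · rw [tv_symm (by omega) u v h x hx.le, tv_symm (by omega) u v h (x + 1) hx]
    have := main v u h.symm h2 (m - (x + 1)) (by omega)
    rw [show m - (x + 1) + 1 = m - x by omega] at this
    exact this.symm

theorem exists_of_adj (hm : 2 ≤ m) {z z' : SubVert V G m} (hz : (Subdiv G m).Adj z z') :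
    ∃ u v, ∃ h : G.Adj u v, ∃ x < m, z = threadVert G m u v h x ∧
      z' = threadVert G m u v h (x + 1) := by
  have main : ∀ z z' : SubVert V G m, subPre G m z z' → ∃ u v, ∃ h : G.Adj u v, ∃ x < m,
      z = threadVert G m u v h x ∧ z' = threadVert G m u v h (x + 1) := by
    rintro (u | ⟨⟨⟨a, b⟩, hab, hlt⟩, i, hi⟩) (v | ⟨⟨⟨a', b'⟩, hab', hlt'⟩, i', hi'⟩) h
    · simp only [subPre] at h; omega
    · simp only [subPre] at h
      rcases h with ⟨rfl, rfl⟩ | ⟨rfl, h⟩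
      · refine ⟨u, b', hab', 0, by omega, (tv_zero _ _ _).symm, ?_⟩
        rw [tv_of_lt u b' hab' hlt' (0 + 1) (by omega) (by omega)]
      · refine ⟨u, a', hab'.symm, 0, by omega, (tv_zero _ _ _).symm, ?_⟩
        rw [tv_symm (by omega) _ _ _ _ (by omega),
          tv_of_lt a' u hab' hlt' _ (by omega) (by omega)]
        congr 3
        omega
    · exact absurd h (by simp [subPre])
    · simp only [subPre, Subtype.mk.injEq, Prod.mk.injEq] at h
      obtain ⟨⟨rfl, rfl⟩, h⟩ := h
      subst h
      refine ⟨a, b, hab, i + 1, by omega, ?_, ?_⟩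
      · rw [tv_of_lt a b hab hlt _ (by omega) (by omega)]; rfl
      · rw [tv_of_lt a b hab hlt _ (by omega) (by omega)]; rfl
  simp only [Subdiv, SimpleGraph.fromRel_adj] at hz
  rcases hz.2 with h | h
  · exact main z z' h
  · obtain ⟨u, v, h, x, hx, h1, h2⟩ := main z' z h
    refine ⟨v, u, h.symm, m - (x + 1), by omega, ?_, ?_⟩
    · rw [h2, tv_symm (by omega) u v h (x + 1) hx]
    · rw [h1, tv_symm (by omega) u v h x hx.le]
      congr 1
      omega

theorem exists_tv (hm : 2 ≤ m) (hdeg : ∀ u : V, ∃ v, G.Adj u v) (z : SubVert V G m) :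
    ∃ u v, ∃ h : G.Adj u v, ∃ x < m, z = threadVert G m u v h x := by
  rcases z with u | ⟨⟨⟨a, b⟩, hab, hlt⟩, i, hi⟩
  · obtain ⟨v, h⟩ := hdeg u
    exact ⟨u, v, h, 0, by omega, (tv_zero _ _ _).symm⟩
  · refine ⟨a, b, hab, i + 1, by omega, ?_⟩
    rw [tv_of_lt a b hab hlt _ (by omega) (by omega)]; rfl

/-- Distance criterion via a potential. -/
theorem dist_eq_of_potential {W : Type*} (H : SimpleGraph W) (w : W) (f : W → ℕ)
    (h0 : ∀ z, f z = 0 ↔ z = w) (hlip : ∀ z z', H.Adj z z' → f z' ≤ f z + 1)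
    (hdesc : ∀ z, f z ≠ 0 → ∃ z', H.Adj z z' ∧ f z' + 1 = f z) (z : W) :
    H.dist w z = f z := by
  have hw : ∀ n z, f z = n → ∃ p : H.Walk w z, p.length = n := by
    intro n
    induction n with
    | zero =>
      intro z hz
      obtain rfl := (h0 z).1 hz
      exact ⟨SimpleGraph.Walk.nil, rfl⟩
    | succ n ih =>
      intro z hz
      obtain ⟨z', ha, he⟩ := hdesc z (by omega)
      obtain ⟨p, hp⟩ := ih z' (by omega)
      exact ⟨p.concat ha.symm, by simp [hp]⟩
  have hlow : ∀ (u z : W) (p : H.Walk u z), f z ≤ f u + p.length := by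
    intro u z p
    induction p with
    | nil => simp
    | cons h p ih =>
      have := hlip _ _ h
      simp only [SimpleGraph.Walk.length_cons]
      omega
  obtain ⟨p, hp⟩ := hw _ z rfl
  refine le_antisymm (hp ▸ SimpleGraph.dist_le p) ?_
  obtain ⟨q, hq⟩ := SimpleGraph.Reachable.exists_walk_length_eq_dist ⟨p⟩
  have := hlow w z q
  rw [(h0 w).2 rfl] at this
  omega

/-- The distance-to-`w` potential on the subdivision. -/
noncomputable def pot (G : SimpleGraph V) (m : ℕ) (w : V) : SubVert V G m → ℕ
  | Sum.inl u => m * G.dist w u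
  | Sum.inr ei => min (m * G.dist w ei.1.1.1 + (ei.2 + 1))
      (m * G.dist w ei.1.1.2 + (m - (ei.2 + 1)))

theorem adj_dist_le (hG : G.Connected) (w : V) {u v : V} (h : G.Adj u v) :
    G.dist w u ≤ G.dist w v + 1 := by
  have h1 := hG.dist_triangle (u := w) (v := v) (w := u)
  rw [SimpleGraph.dist_eq_one_iff_adj.2 h.symm] at h1
  exact h1

theorem mul_dist_le (hG : G.Connected) (m : ℕ) (w : V) {u v : V} (h : G.Adj u v) :
    m * G.dist w u ≤ m * G.dist w v + m := by
  have := Nat.mul_le_mul_left m (adj_dist_le hG w h)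
  rwa [Nat.mul_add, Nat.mul_one] at this

theorem pot_tv (hm : 2 ≤ m) (hG : G.Connected) (w u v : V) (h : G.Adj u v) (x : ℕ)
    (hx : x ≤ m) : pot G m w (threadVert G m u v h x) =
      min (m * G.dist w u + x) (m * G.dist w v + (m - x)) := by
  have main : ∀ (u v : V) (h : G.Adj u v) (hlt : u < v) (x : ℕ) (hx : x ≤ m),
      pot G m w (threadVert G m u v h x) =
      min (m * G.dist w u + x) (m * G.dist w v + (m - x)) := by
    intro u v h hlt x hx
    have h1 := mul_dist_le hG m w h
    have h2 := mul_dist_le hG m w h.symm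
    rcases Nat.eq_zero_or_pos x with rfl | h0
    · rw [tv_zero]
      simp only [pot]
      omega
    · rcases Nat.lt_or_ge x m with h3 | h3
      · rw [tv_of_lt u v h hlt x h0 h3]
        simp only [pot]
        omega
      · obtain rfl : x = m := le_antisymm hx h3
        rw [tv_end (by omega)]
        simp only [pot]
        omega
  rcases lt_or_gt_of_ne h.ne with h2 | h2
  · exact main u v h h2 x hx
  · rw [tv_symm (by omega) u v h x hx, main v u h.symm h2 (m - x) (by omega), min_comm]
    congr 2
    omega

theorem dist_inl (hm : 2 ≤ m) (hG : G.Connected) (hdeg : ∀ u : V, ∃ v, G.Adj u v) (w : V)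
    (z : SubVert V G m) : (Subdiv G m).dist (Sum.inl w) z = pot G m w z := by
  apply dist_eq_of_potential
  · intro z
    obtain ⟨u, v, h, x, hx, rfl⟩ := exists_tv hm hdeg z
    rw [pot_tv hm hG w u v h x hx.le]
    constructor
    · intro h0
      have h1 : x = 0 := by omega
      have h2 : m * G.dist w u = 0 := by omega
      subst h1
      have h3 : G.dist w u = 0 := by
        rcases Nat.mul_eq_zero.1 h2 with h | h
        · omega
        · exact h
      rw [tv_zero, hG.dist_eq_zero_iff.1 h3]
    · intro h0
      obtain ⟨rfl, rfl⟩ := tv_eq_inl w u v h x hx h0.symm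
      simp
  · intro z z' ha
    obtain ⟨u, v, h, x, hx, rfl, rfl⟩ := exists_of_adj hm ha
    rw [pot_tv hm hG w u v h x hx.le, pot_tv hm hG w u v h (x + 1) hx]
    omega
  · intro z hz
    obtain ⟨u, v, h, x, hx, rfl⟩ := exists_tv hm hdeg z
    rcases Nat.eq_zero_or_pos x with rfl | h0
    · -- a branch vertex: step towards `w`
      rw [tv_zero] at hz ⊢
      have hz' : m * G.dist w u ≠ 0 := hz
      have h3 : G.dist w u ≠ 0 := by
        intro h; rw [h] at hz'; simp at hz'
      have hne : u ≠ w := by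
        rintro rfl; simp at h3
      obtain ⟨u', hu', hd⟩ : ∃ u', G.Adj u u' ∧ G.dist w u' + 1 = G.dist w u := by
        obtain ⟨p, hp⟩ := hG.exists_walk_length_eq_dist u w
        cases p with
        | nil => exact absurd rfl hne
        | @cons _ u' _ ha p =>
          refine ⟨u', ha, ?_⟩
          have h1 := SimpleGraph.dist_le p
          have h2 := adj_dist_le hG w ha
          rw [SimpleGraph.Walk.length_cons] at hp
          rw [SimpleGraph.dist_comm (u := u') (v := w)] at h1
          rw [SimpleGraph.dist_comm (u := u) (v := w)] at hp
          omega
      have hadj := tv_adj hm u u' hu' 0 (by omega)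
      rw [tv_zero] at hadj
      refine ⟨_, hadj, ?_⟩
      have e : pot G m w (Sum.inl u) = m * G.dist w u := rfl
      rw [e, pot_tv hm hG w u u' hu' (0 + 1) (by omega), ← hd, Nat.mul_add, Nat.mul_one]
      omega
    · have e := pot_tv hm hG w u v h x hx.le
      rcases Nat.le_total (m * G.dist w u + x) (m * G.dist w v + (m - x)) with hc | hc
      · have hadj := tv_adj hm u v h (x - 1) (by omega)
        rw [show x - 1 + 1 = x by omega] at hadj
        refine ⟨_, hadj.symm, ?_⟩
        rw [e, pot_tv hm hG w u v h (x - 1) (by omega)]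
        omega
      · refine ⟨_, tv_adj hm u v h x hx, ?_⟩
        rw [e, pot_tv hm hG w u v h (x + 1) (by omega)]
        omega

end Geometry

/-! ### The one-cop strategy on the subdivision -/

section Strategy

variable {V : Type*} [LinearOrder V] {G : SimpleGraph V} {M : ℕ}

/-- Cops win from the set `X` of candidates after probing. -/
def WP {W : Type*} (H : SimpleGraph W) (X : Set W) : Prop :=
  ¬ X.Subsingleton → Win H 1 (nbhd H X)

theorem WP.mono {W : Type*} {H : SimpleGraph W} {X Y : Set W} (h : WP H Y) (hXY : X ⊆ Y) :
    WP H X := fun hX => (h (fun hY => hX (hY.anti hXY))).mono (nbhd_mono H hXY)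

theorem exists_near (hM : 1 ≤ M) (hdeg : ∀ u : V, ∃ v, G.Adj u v)
    (z : SubVert V G (2 * M + 1)) :
    ∃ c v, ∃ h : G.Adj c v, ∃ y ≤ M, z = threadVert G (2 * M + 1) c v h y := by
  obtain ⟨u, v, h, x, hx, rfl⟩ := exists_tv (by omega) hdeg z
  rcases Nat.lt_or_ge M x with h1 | h1
  · exact ⟨v, u, h.symm, 2 * M + 1 - x, by omega, tv_symm (by omega) _ _ _ _ hx.le⟩
  · exact ⟨u, v, h, x, h1, rfl⟩

theorem dist_tv (hM : 1 ≤ M) (hG : G.Connected) (hdeg : ∀ u : V, ∃ v, G.Adj u v) (w c v : V)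
    (h : G.Adj c v) (y : ℕ) (hy : y ≤ M) :
    (Subdiv G (2 * M + 1)).dist (Sum.inl w) (threadVert G (2 * M + 1) c v h y) =
      min ((2 * M + 1) * G.dist w c + y) ((2 * M + 1) * G.dist w v + (2 * M + 1 - y)) := by
  rw [dist_inl (by omega) hG hdeg, pot_tv (by omega) hG w c v h y (by omega)]

theorem near_dist (hM : 1 ≤ M) (hG : G.Connected) (hdeg : ∀ u : V, ∃ v, G.Adj u v) (w c v : V)
    (h : G.Adj c v) (y : ℕ) (hy : y ≤ M) :
    (Subdiv G (2 * M + 1)).dist (Sum.inl w) (threadVert G (2 * M + 1) c v h y) =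
      (2 * M + 1) * G.dist w c + y ∨
    (Subdiv G (2 * M + 1)).dist (Sum.inl w) (threadVert G (2 * M + 1) c v h y) + y =
      (2 * M + 1) * G.dist w c := by
  rw [dist_tv hM hG hdeg w c v h y hy]
  have h1 := adj_dist_le hG w h
  rcases Nat.lt_or_ge (G.dist w v) (G.dist w c) with h2 | h2
  · have h3 : G.dist w c = G.dist w v + 1 := by omega
    rw [h3, Nat.mul_add, Nat.mul_one]
    omega
  · have h3 := Nat.mul_le_mul_left (2 * M + 1) h2
    omega

theorem obs_unique {D d d' y y' : ℕ} (hy : y ≤ M) (hy' : y' ≤ M)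
    (h : D = (2 * M + 1) * d + y ∨ D + y = (2 * M + 1) * d)
    (h' : D = (2 * M + 1) * d' + y' ∨ D + y' = (2 * M + 1) * d') : y = y' ∧ d = d' := by
  rcases Nat.lt_trichotomy d d' with h1 | h1 | h1
  · have := Nat.mul_le_mul_left (2 * M + 1) (Nat.succ_le_of_lt h1)
    rw [Nat.succ_eq_add_one, Nat.mul_add, Nat.mul_one] at this
    omega
  · subst h1
    omega
  · have := Nat.mul_le_mul_left (2 * M + 1) (Nat.succ_le_of_lt h1)
    rw [Nat.succ_eq_add_one, Nat.mul_add, Nat.mul_one] at this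
    omega

/-- One probing round at a branch vertex. -/
theorem step (hM : 1 ≤ M) (hG : G.Connected) (hdeg : ∀ u : V, ∃ v, G.Adj u v)
    (X : Set (SubVert V G (2 * M + 1))) (w : V)
    (hX : ∀ X' ⊆ nbhd (Subdiv G (2 * M + 1)) X, ∀ D y δ, y ≤ M → X'.Nonempty →
      (∀ z ∈ X', (Subdiv G (2 * M + 1)).dist (Sum.inl w) z = D) →
      (∀ z ∈ X', ∀ c v, ∀ h : G.Adj c v, ∀ x ≤ M, z = threadVert G (2 * M + 1) c v h x →
        x = y ∧ G.dist w c = δ) → WP (Subdiv G (2 * M + 1)) X') :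
    WP (Subdiv G (2 * M + 1)) X := by
  intro _
  refine Win.mk _ (fun _ => Sum.inl w) (fun a ha => ?_)
  have hne : (cls (Subdiv G (2 * M + 1)) (nbhd (Subdiv G (2 * M + 1)) X)
      (fun _ : Fin 1 => Sum.inl w) a).Nonempty := by
    by_contra hne
    rw [Set.not_nonempty_iff_eq_empty] at hne
    exact ha (hne ▸ Set.subsingleton_empty)
  obtain ⟨z₀, hz₀⟩ := hne
  obtain ⟨c₀, v₀, h₀, y₀, hy₀, e₀⟩ := exists_near hM hdeg z₀
  refine hX _ (fun z hz => hz.1) (a 0) y₀ (G.dist w c₀) hy₀ ⟨z₀, hz₀⟩ (fun z hz => hz.2 0)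
    (fun z hz c v h x hx e => ?_) ha
  have h1 := near_dist hM hG hdeg w c₀ v₀ h₀ y₀ hy₀
  have h2 := near_dist hM hG hdeg w c v h x hx
  rw [← e₀, hz₀.2 0] at h1
  rw [← e, hz.2 0] at h2
  exact obs_unique hx hy₀ h2 h1

/-- The possible moves of the robber. -/
theorem move (hM : 1 ≤ M) (c v : V) (h : G.Adj c v) (y : ℕ) (hy : y ≤ M)
    (z : SubVert V G (2 * M + 1))
    (hz : z = threadVert G (2 * M + 1) c v h y ∨
      (Subdiv G (2 * M + 1)).Adj (threadVert G (2 * M + 1) c v h y) z) :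
    (∃ v', ∃ h' : G.Adj c v', ∃ y' ≤ M, y' ≤ y + 1 ∧ y ≤ y' + 1 ∧
      z = threadVert G (2 * M + 1) c v' h' y' ∧ (y ≠ 0 → v' = v)) ∨
    (y = M ∧ z = threadVert G (2 * M + 1) v c h.symm M) := by
  rcases hz with hz | hz
  · exact Or.inl ⟨v, h, y, hy, by omega, by omega, hz, fun _ => rfl⟩
  obtain ⟨a, b, hab, x, hx, e1, rfl⟩ := exists_of_adj (by omega) hz
  rcases Nat.eq_zero_or_pos y with rfl | h0
  · rw [tv_zero] at e1
    obtain ⟨rfl, rfl⟩ := tv_eq_inl _ _ _ _ _ hx e1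
    exact Or.inl ⟨b, hab, 0 + 1, by omega, by omega, by omega, rfl, by simp⟩
  · rcases tv_inj c v h y h0 (by omega) a b hab x hx.le e1 with ⟨rfl, rfl, rfl⟩ | ⟨rfl, rfl, e⟩
    · rcases Nat.lt_or_ge y M with h2 | h2
      · exact Or.inl ⟨v, h, y + 1, by omega, by omega, by omega, rfl, fun _ => rfl⟩
      · refine Or.inr ⟨by omega, ?_⟩
        rw [tv_symm (by omega) _ _ _ _ (by omega)]
        congr 1
        omega
    · refine Or.inl ⟨v, h, y - 1, by omega, by omega, by omega, ?_, fun _ => rfl⟩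
      rw [tv_symm (by omega) _ _ _ _ (by omega)]
      congr 1
      omega

/-- Candidate set: nearest branch vertex in `C`, other endpoint in `U`, thread in `E`,
distance `y` to the nearest branch vertex. -/
def St (G : SimpleGraph V) (M : ℕ) (C U : Set V) (E : Finset (Sym2 V)) (y : ℕ) :
    Set (SubVert V G (2 * M + 1)) :=
  {z | ∃ c v, ∃ h : G.Adj c v, z = threadVert G (2 * M + 1) c v h y ∧ c ∈ C ∧ v ∈ U ∧
    s(c, v) ∈ E}

theorem St_mono {C C' U : Set V} {E : Finset (Sym2 V)} {y : ℕ} (h : C ⊆ C') :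
    St G M C U E y ⊆ St G M C' U E y := by
  rintro z ⟨c, v, ha, e, h1, h2⟩
  exact ⟨c, v, ha, e, h h1, h2⟩

theorem St_zero {C U : Set V} {E : Finset (Sym2 V)} :
    St G M C U E 0 ⊆ Sum.inl '' C := by
  rintro z ⟨c, v, ha, rfl, h1, h2⟩
  exact ⟨c, h1, (tv_zero _ _ _).symm⟩

theorem trans_St (hM : 1 ≤ M) {C U : Set V} {E : Finset (Sym2 V)} {y : ℕ} (hy : y ≤ M)
    (hCU : C ⊆ U) (hyM : y = M → U ⊆ C) (hy0 : y = 0 → nbhd G C ⊆ U ∧ ∀ e, e ∈ E)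
    {X' : Set (SubVert V G (2 * M + 1))}
    (hX' : X' ⊆ nbhd (Subdiv G (2 * M + 1)) (St G M C U E y)) (w : V) {y' δ : ℕ}
    (hne : X'.Nonempty)
    (hobs : ∀ z ∈ X', ∀ c v, ∀ h : G.Adj c v, ∀ x ≤ M, z = threadVert G (2 * M + 1) c v h x →
        x = y' ∧ G.dist w c = δ) :
    y' ≤ y + 1 ∧ y ≤ y' + 1 ∧ X' ⊆ St G M {c | c ∈ C ∧ G.dist w c = δ} U E y' := by
  have key : ∀ z ∈ X', y' ≤ y + 1 ∧ y ≤ y' + 1 ∧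
      z ∈ St G M {c | c ∈ C ∧ G.dist w c = δ} U E y' := by
    intro z hz
    obtain ⟨z₀, ⟨c, v, h, rfl, hc, hv, he⟩, hmv⟩ := hX' hz
    rcases move hM c v h y hy z hmv with ⟨v', h', x, hx, hx1, hx2, e, hvv⟩ | ⟨rfl, e⟩
    · obtain ⟨rfl, hd⟩ := hobs z hz c v' h' x hx e
      refine ⟨hx1, hx2, c, v', h', e, ⟨hc, hd⟩, ?_⟩
      rcases Nat.eq_zero_or_pos y with h0 | h0
      · exact ⟨(hy0 h0).1 ⟨c, hc, Or.inr h'⟩, (hy0 h0).2 _⟩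
      · obtain rfl := hvv (by omega)
        exact ⟨hv, he⟩
    · obtain ⟨rfl, hd⟩ := hobs z hz v c h.symm y hy e
      refine ⟨by omega, by omega, v, c, h.symm, e, ⟨hyM rfl hv, hd⟩, hCU hc, ?_⟩
      rwa [Sym2.eq_swap]
  obtain ⟨z, hz⟩ := hne
  exact ⟨(key z hz).1, (key z hz).2.1, fun z hz => (key z hz).2.2⟩

theorem stepA (hM : 1 ≤ M) (hG : G.Connected) (hdeg : ∀ u : V, ∃ v, G.Adj u v)
    {C U : Set V} {E : Finset (Sym2 V)} {y : ℕ} (hy : y ≤ M)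
    (hCU : C ⊆ U) (hyM : y = M → U ⊆ C) (hy0 : y = 0 → nbhd G C ⊆ U ∧ ∀ e, e ∈ E) (w : V)
    (H : ∀ y' δ, y' ≤ M → y' ≤ y + 1 → y ≤ y' + 1 →
      WP (Subdiv G (2 * M + 1)) (St G M {c | c ∈ C ∧ G.dist w c = δ} U E y')) :
    WP (Subdiv G (2 * M + 1)) (St G M C U E y) := by
  refine step hM hG hdeg _ w (fun X' hX' D y' δ hy' hne _ hobs => ?_)
  obtain ⟨h1, h2, h3⟩ := trans_St hM hy hCU hyM hy0 hX' w hne hobs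
  exact (H y' δ hy' h1 h2).mono h3

theorem mem_thread_iff (hM : 1 ≤ M) (hG : G.Connected) (hdeg : ∀ u : V, ∃ v, G.Adj u v)
    (w c v : V) (h : G.Adj c v) (y : ℕ) (hy : y ≤ M) (hy1 : 1 ≤ y) :
    w ∈ s(c, v) ↔ (Subdiv G (2 * M + 1)).dist (Sum.inl w)
      (threadVert G (2 * M + 1) c v h y) < 2 * M + 1 := by
  rw [dist_tv hM hG hdeg w c v h y hy, Sym2.mem_iff]
  constructor
  · rintro (rfl | rfl)
    · simp only [SimpleGraph.dist_self]; omega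
    · simp only [SimpleGraph.dist_self]; omega
  · intro hlt
    by_contra hc
    push Not at hc
    have h1 := Nat.mul_le_mul_left (2 * M + 1) (hG.pos_dist_of_ne hc.1)
    have h2 := Nat.mul_le_mul_left (2 * M + 1) (hG.pos_dist_of_ne hc.2)
    simp only [Nat.succ_eq_add_one, Nat.zero_add, Nat.mul_one] at h1 h2
    omega

/-- A splitting probe: either the robber reaches a branch vertex or the number of
possible threads decreases (or the robber is located). -/
theorem stepB (hM : 1 ≤ M) (hG : G.Connected) (hdeg : ∀ u : V, ∃ v, G.Adj u v)
    {C U : Set V} {E : Finset (Sym2 V)} {y : ℕ} (hy : y ≤ M) (hy1 : 1 ≤ y)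
    (hCU : C ⊆ U) (hyM : y = M → U ⊆ C)
    (H0 : y ≤ 1 → WP (Subdiv G (2 * M + 1)) (Sum.inl '' C))
    (H : ∀ y', 1 ≤ y' → y' ≤ M → y' ≤ y + 1 → y ≤ y' + 1 → ∀ E' ⊂ E,
      WP (Subdiv G (2 * M + 1)) (St G M C U E' y')) :
    WP (Subdiv G (2 * M + 1)) (St G M C U E y) := by
  classical
  rcases E.eq_empty_or_nonempty with rfl | ⟨e, he⟩
  · intro hns
    exfalso
    apply hns
    rintro z ⟨c, v, h, _, _, _, hmem⟩
    exact absurd hmem (Finset.notMem_empty _)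
  -- choice of the probe
  obtain ⟨w, hw⟩ : ∃ w, (E = {e} ∧ w ∈ e) ∨
      ((∃ e' ∈ E, w ∉ e') ∧ (∃ e' ∈ E, w ∈ e')) := by
    by_cases hs : E = {e}
    · exact ⟨e.out.1, Or.inl ⟨hs, Sym2.out_fst_mem e⟩⟩
    · obtain ⟨e', he', hne⟩ : ∃ e' ∈ E, e' ≠ e := by
        by_contra hc
        push Not at hc
        exact hs (Finset.eq_singleton_iff_unique_mem.2 ⟨he, hc⟩)
      have : ¬ ∀ w, w ∈ e' ↔ w ∈ e := fun h => hne (Sym2.ext h)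
      push Not at this
      obtain ⟨w, hw⟩ := this
      refine ⟨w, Or.inr ?_⟩
      rcases hw with ⟨h1, h2⟩ | ⟨h1, h2⟩
      · exact ⟨⟨e, he, h2⟩, ⟨e', he', h1⟩⟩
      · exact ⟨⟨e', he', h1⟩, ⟨e, he, h2⟩⟩
  refine step hM hG hdeg _ w (fun X' hX' D y' δ hy' hne hD hobs => ?_)
  obtain ⟨h1, h2, h3⟩ := trans_St hM hy hCU hyM (fun h => by omega) hX' w hne hobs
  have h4 : X' ⊆ St G M C U E y' := h3.trans (St_mono (fun c hc => hc.1))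
  rcases Nat.eq_zero_or_pos y' with rfl | hy'1
  · exact (H0 (by omega)).mono (h4.trans St_zero)
  by_cases hlt : D < 2 * M + 1
  · rcases hw with ⟨rfl, hwe⟩ | ⟨⟨e', he', hwe'⟩, _⟩
    · intro hns
      exfalso
      apply hns
      intro z₁ hz₁ z₂ hz₂
      have d1 := hD z₁ hz₁
      have d2 := hD z₂ hz₂
      obtain ⟨c₁, v₁, a₁, rfl, _, _, m₁⟩ := h4 hz₁
      obtain ⟨c₂, v₂, a₂, rfl, _, _, m₂⟩ := h4 hz₂
      rw [Finset.mem_singleton] at m₁ m₂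
      have hee : s(c₁, v₁) = s(c₂, v₂) := m₁.trans m₂.symm
      rcases Sym2.eq_iff.1 hee with ⟨rfl, rfl⟩ | ⟨rfl, rfl⟩
      · rfl
      · exfalso
        rw [dist_tv hM hG hdeg w _ _ _ y' hy'] at d1 d2
        rw [← m₁, Sym2.mem_iff] at hwe
        have hone := SimpleGraph.dist_eq_one_iff_adj.2 a₁
        have hone' := SimpleGraph.dist_eq_one_iff_adj.2 a₂
        rcases hwe with rfl | rfl
        · rw [SimpleGraph.dist_self, hone] at d1 d2
          omega
        · rw [SimpleGraph.dist_self, hone'] at d1 d2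
          omega
    · refine (H y' hy'1 hy' h1 h2 (E.filter (fun e => w ∈ e)) ?_).mono ?_
      · exact Finset.filter_ssubset.2 ⟨e', he', hwe'⟩
      · intro z hz
        have dz := hD z hz
        obtain ⟨c, v, a, rfl, hc, hv, hm⟩ := h4 hz
        refine ⟨c, v, a, rfl, hc, hv, Finset.mem_filter.2 ⟨hm, ?_⟩⟩
        rw [mem_thread_iff hM hG hdeg w c v a y' hy' hy'1, dz]
        exact hlt
  · have hw' : ∃ e' ∈ E, w ∈ e' := by
      rcases hw with ⟨_, hwe⟩ | ⟨_, h⟩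
      · exact ⟨e, he, hwe⟩
      · exact h
    obtain ⟨e', he', hwe'⟩ := hw'
    refine (H y' hy'1 hy' h1 h2 (E.filter (fun e => w ∉ e)) ?_).mono ?_
    · exact Finset.filter_ssubset.2 ⟨e', he', fun h => h hwe'⟩
    · intro z hz
      have dz := hD z hz
      obtain ⟨c, v, a, rfl, hc, hv, hm⟩ := h4 hz
      refine ⟨c, v, a, rfl, hc, hv, Finset.mem_filter.2 ⟨hm, ?_⟩⟩
      rw [mem_thread_iff hM hG hdeg w c v a y' hy' hy'1, dz]
      exact hlt

/-- `C` gives constant answers to the first `j` probes of `p`. -/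
def ConstOn (G : SimpleGraph V) {k : ℕ} (p : Fin k → V) (j : ℕ) (C : Set V) : Prop :=
  ∀ i : Fin k, i.1 < j → ∀ c ∈ C, ∀ c' ∈ C, G.dist (p i) c = G.dist (p i) c'

theorem ConstOn.succ {k : ℕ} {p : Fin k → V} {j : ℕ} {C : Set V} (h : ConstOn G p j C)
    (hj : j < k) (δ : ℕ) : ConstOn G p (j + 1) {c | c ∈ C ∧ G.dist (p ⟨j, hj⟩) c = δ} := by
  intro i hi c hc c' hc'
  rcases Nat.lt_succ_iff_lt_or_eq.1 hi with h1 | h1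
  · exact h i h1 c hc.1 c' hc'.1
  · obtain rfl : i = ⟨j, hj⟩ := Fin.ext h1
    rw [hc.2, hc'.2]

theorem thread (hG : G.Connected) (hdeg : ∀ u : V, ∃ v, G.Adj u v) {k : ℕ}
    (hM : k + 2 ≤ M) (U : Set V) (p : Fin k → V)
    (hH : ∀ C ⊆ U, ConstOn G p k C → WP (Subdiv G (2 * M + 1)) (Sum.inl '' C))
    (E : Finset (Sym2 V)) :
    (∀ C ⊆ U, WP (Subdiv G (2 * M + 1)) (Sum.inl '' C) → ∀ y, 1 ≤ y → y < M →
      WP (Subdiv G (2 * M + 1)) (St G M C U E y)) ∧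
    WP (Subdiv G (2 * M + 1)) (St G M U U E M) ∧
    (∀ n j, j + n = k → ∀ C ⊆ U, ConstOn G p j C → ∀ y, M ≤ y + j + 1 → y < M →
      WP (Subdiv G (2 * M + 1)) (St G M C U E y)) := by
  induction E using Finset.strongInduction with
  | H E ih =>
    have hM1 : 1 ≤ M := by omega
    have hII : ∀ C ⊆ U, WP (Subdiv G (2 * M + 1)) (Sum.inl '' C) → ∀ y, 1 ≤ y → y < M →
        WP (Subdiv G (2 * M + 1)) (St G M C U E y) := by
      intro C hC hW y hy1 hyM
      refine stepB hM1 hG hdeg hyM.le hy1 hC (fun h => by omega) (fun _ => hW) ?_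
      intro y' h1 h2 h3 h4 E' hE'
      rcases Nat.lt_or_ge y' M with h5 | h5
      · exact (ih E' hE').1 C hC hW y' h1 h5
      · obtain rfl : y' = M := by omega
        exact (ih E' hE').2.1.mono (St_mono hC)
    have hIII : WP (Subdiv G (2 * M + 1)) (St G M U U E M) := by
      refine stepB hM1 hG hdeg le_rfl hM1 subset_rfl (fun _ => subset_rfl)
        (fun h => by omega) ?_
      intro y' h1 h2 h3 h4 E' hE'
      rcases Nat.lt_or_ge y' M with h5 | h5
      · exact (ih E' hE').2.2 k 0 (by omega) U subset_rfl (fun i hi => by omega) y'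
          (by omega) h5
      · obtain rfl : y' = M := by omega
        exact (ih E' hE').2.1
    refine ⟨hII, hIII, ?_⟩
    intro n
    induction n with
    | zero =>
      intro j hj C hC hc y hy hyM
      obtain rfl : j = k := by omega
      exact hII C hC (hH C hC hc) y (by omega) hyM
    | succ n ihn =>
      intro j hj C hC hc y hy hyM
      have hjk : j < k := by omega
      refine stepA hM1 hG hdeg hyM.le hC (fun h => by omega) (fun h => by omega)
        (p ⟨j, hjk⟩) ?_
      intro y' δ h1 h2 h3
      rcases Nat.lt_or_ge y' M with h5 | h5
      · exact ihn (j + 1) (by omega) _ (fun c h => hC h.1) (hc.succ hjk δ) y' (by omega) h5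
      · obtain rfl : y' = M := by omega
        exact hIII.mono (St_mono (fun c h => hC h.1))

theorem ready_of_cls {k : ℕ} {U : Set V} {p : Fin k → V}
    (h : ∀ a, ¬ (cls G U p a).Subsingleton →
      WP (Subdiv G (2 * M + 1)) (Sum.inl '' (cls G U p a))) :
    ∀ C ⊆ U, ConstOn G p k C → WP (Subdiv G (2 * M + 1)) (Sum.inl '' C) := by
  intro C hC hc
  by_cases hs : C.Subsingleton
  · exact fun hns => absurd (hs.image _) hns
  · obtain ⟨c₀, h₀⟩ : C.Nonempty := by
      by_contra hne
      rw [Set.not_nonempty_iff_eq_empty] at hne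
      exact hs (hne ▸ Set.subsingleton_empty)
    have hsub : C ⊆ cls G U p (fun i => G.dist (p i) c₀) :=
      fun c hcC => ⟨hC hcC, fun i => hc i i.2 c hcC c₀ h₀⟩
    exact (h _ (fun hs' => hs (hs'.anti hsub))).mono (Set.image_mono hsub)

theorem visit [Fintype V] (hG : G.Connected) (hdeg : ∀ u : V, ∃ v, G.Adj u v) {k : ℕ}
    (hM : k + 2 ≤ M) {U : Set V} (hU : Win G k U) :
    ∀ T, nbhd G T ⊆ U → WP (Subdiv G (2 * M + 1)) (Sum.inl '' T) := by
  induction hU with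
  | mk U p h ih =>
    intro T hT
    have hM1 : 1 ≤ M := by omega
    have hTU : T ⊆ U := fun t ht => hT ⟨t, ht, Or.inl rfl⟩
    have hH := ready_of_cls (M := M) (fun a ha => ih a ha (cls G U p a) subset_rfl)
    have main : ∀ n j, j + n = k → ∀ C ⊆ T, ConstOn G p j C → ∀ y ≤ j,
        WP (Subdiv G (2 * M + 1)) (St G M C U Finset.univ y) := by
      intro n
      induction n with
      | zero =>
        intro j hj C hC hc y hy
        obtain rfl : j = k := by omega
        have hr := hH C (hC.trans hTU) hc
        rcases Nat.eq_zero_or_pos y with rfl | h0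
        · exact hr.mono St_zero
        · exact (thread hG hdeg hM U p hH Finset.univ).1 C (hC.trans hTU) hr y h0 (by omega)
      | succ n ihn =>
        intro j hj C hC hc y hy
        have hjk : j < k := by omega
        refine stepA hM1 hG hdeg (by omega) (hC.trans hTU) (fun h => by omega)
          (fun _ => ⟨(nbhd_mono G hC).trans hT, fun e => Finset.mem_univ e⟩) (p ⟨j, hjk⟩) ?_
        intro y' δ h1 h2 h3
        exact ihn (j + 1) (by omega) _ (fun c h => hC h.1) (hc.succ hjk δ) y' (by omega)
    refine (main k 0 (by omega) T subset_rfl (fun i hi => by omega) 0 le_rfl).mono ?_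
    rintro z ⟨c, hc, rfl⟩
    obtain ⟨v, hv⟩ := hdeg c
    exact ⟨c, v, hv, (tv_zero _ _ _).symm, hc, hT ⟨c, hc, Or.inr hv⟩, Finset.mem_univ _⟩

theorem subdiv_win [Fintype V] (hG : G.Connected) (hdeg : ∀ u : V, ∃ v, G.Adj u v) {k : ℕ}
    (hM : k + 2 ≤ M) (hU : Win G k Set.univ) (u v : V) (huv : u ≠ v) :
    Win (Subdiv G (2 * M + 1)) 1 Set.univ := by
  have hM1 : 1 ≤ M := by omega
  have hvis := visit hG hdeg hM hU Set.univ (Set.subset_univ _)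
  obtain ⟨p, hH⟩ : ∃ p : Fin k → V, ∀ C ⊆ Set.univ, ConstOn G p k C →
      WP (Subdiv G (2 * M + 1)) (Sum.inl '' C) := by
    cases hU with
    | mk _ p h =>
      exact ⟨p, ready_of_cls (fun a ha => visit hG hdeg hM (h a ha) _ subset_rfl)⟩
  have hth := thread hG hdeg hM Set.univ p hH Finset.univ
  have hWP : WP (Subdiv G (2 * M + 1)) Set.univ := by
    refine step hM1 hG hdeg _ u (fun X' _ D y δ hy _ _ hobs => ?_)
    have hsub : X' ⊆ St G M Set.univ Set.univ Finset.univ y := by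
      intro z hz
      obtain ⟨c, w, h, x, hx, e⟩ := exists_near hM1 hdeg z
      obtain ⟨rfl, _⟩ := hobs z hz c w h x hx e
      exact ⟨c, w, h, e, trivial, trivial, Finset.mem_univ _⟩
    rcases Nat.eq_zero_or_pos y with rfl | h0
    · exact hvis.mono (hsub.trans St_zero)
    · rcases Nat.lt_or_ge y M with h1 | h1
      · exact (hth.1 _ subset_rfl hvis y h0 h1).mono hsub
      · obtain rfl : y = M := by omega
        exact hth.2.1.mono hsub
  have hns : ¬ (Set.univ : Set (SubVert V G (2 * M + 1))).Subsingleton :=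
    fun h => huv (Sum.inl.inj (h (Set.mem_univ (Sum.inl u)) (Set.mem_univ (Sum.inl v))))
  exact (hWP hns).mono (fun z _ => ⟨z, trivial, Or.inl rfl⟩)

end Strategy

theorem not_localizable_zero {V : Type*} (G : SimpleGraph V) (u v : V) (huv : u ≠ v) :
    ¬ Localizable G 0 := by
  rintro ⟨A, hA⟩
  obtain ⟨t, ht⟩ := hA (fun _ => u) (fun _ => Or.inl rfl)
  have hmem : v ∈ RSet G A (fun _ => u) t := by
    refine ⟨fun _ => v, fun _ => Or.inl rfl, ?_, rfl⟩
    generalize t + 1 = s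
    induction s with
    | zero => rfl
    | succ s ih =>
      rw [probeHist, probeHist, ih]
      congr 2
      funext i
      exact i.elim0
  rw [ht] at hmem
  exact huv hmem.symm

theorem localizable_card {n : ℕ} (G : SimpleGraph (Fin n)) (hG : G.Connected) :
    Localizable G n := by
  apply Win.localizable
  refine Win.mk _ id (fun a ha => absurd ?_ ha)
  intro x hx y hy
  have h1 := hx.2 x
  have h2 := hy.2 x
  rw [id, SimpleGraph.dist_self] at h1
  rw [id, ← h1] at h2
  exact hG.dist_eq_zero_iff.1 h2

/-- There is an absolute constant `C > 0` such that for every finite connected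
graph `G` with at least two vertices, `η(G) ≤ C · ζ(G)`. -/
theorem subdivNum_le_const_mul_locNum :
    ∃ C : ℕ, 0 < C ∧ ∀ (n : ℕ) (G : SimpleGraph (Fin n)),
      G.Connected → 2 ≤ n → subdivNum G ≤ C * locNum G := by
  refine ⟨7, by norm_num, fun n G hG hn => ?_⟩
  have hloc : Localizable G (locNum G) :=
    Nat.sInf_mem (s := {k | Localizable G k}) ⟨n, localizable_card G hG⟩
  have huv : (⟨0, by omega⟩ : Fin n) ≠ ⟨1, by omega⟩ := by simp
  have hpos : locNum G ≠ 0 := by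
    intro h0
    rw [h0] at hloc
    exact not_localizable_zero G _ _ huv hloc
  have : Nontrivial (Fin n) := ⟨_, _, huv⟩
  have hdeg : ∀ u : Fin n, ∃ v, G.Adj u v := fun u => hG.preconnected.exists_adj_of_nontrivial u
  have hwin := subdiv_win (M := locNum G + 2) hG hdeg le_rfl (win_of_localizable hloc) _ _ huv
  have hle : subdivNum G ≤ 2 * (locNum G + 2) + 1 :=
    Nat.sInf_le ⟨by omega, hwin.localizable⟩
  omega
end

section
/- For every integer m ≥ 3 there exists a finite connected graph G such that η(G) = m and ζ(G) = 2^{m−1}. In particular, ζ is not bounded above by any function that is O(η). -/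
open SimpleGraph

namespace RobLoc

/-- closed neighbourhood of a set -/
def nbhd {V : Type*} (G : SimpleGraph V) (S : Set V) : Set V :=
  {w | ∃ v ∈ S, w = v ∨ G.Adj v w}

/-- the cops win from belief `S` (about to probe) -/
inductive Win {V : Type*} (G : SimpleGraph V) (k : ℕ) : Set V → Prop
  | step (S : Set V) (p : Fin k → V)
      (h : ∀ w ∈ S, ¬ ({v | v ∈ S ∧ ∀ i, G.dist (p i) v = G.dist (p i) w} : Set V).Subsingleton →
        Win G k (nbhd G {v | v ∈ S ∧ ∀ i, G.dist (p i) v = G.dist (p i) w})) : Win G k S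

theorem nbhd_mono {V : Type*} (G : SimpleGraph V) {S T : Set V} (h : S ⊆ T) :
    nbhd G S ⊆ nbhd G T := by
  rintro w ⟨v, hv, hw⟩
  exact ⟨v, h hv, hw⟩

theorem Win.mono {V : Type*} {G : SimpleGraph V} {k : ℕ} {T : Set V} (h : Win G k T) :
    ∀ {S : Set V}, S ⊆ T → Win G k S := by
  induction h with
  | step T p h ih =>
    intro S hST
    refine Win.step S p ?_
    intro w hw hns
    have hsub : {v | v ∈ S ∧ ∀ i, G.dist (p i) v = G.dist (p i) w} ⊆
        {v | v ∈ T ∧ ∀ i, G.dist (p i) v = G.dist (p i) w} := fun v hv => ⟨hST hv.1, hv.2⟩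
    refine ih w (hST hw) (fun hs => hns (hs.anti hsub)) (nbhd_mono G hsub)

theorem probeHist_succ' {V : Type*} (G : SimpleGraph V) {k : ℕ} (A : CopStrategy V k)
    (r : ℕ → V) (t : ℕ) :
    probeHist G A r (t + 1) = (fun i => G.dist (A [] i) (r 0)) ::
      probeHist G (fun l => A ((fun i => G.dist (A [] i) (r 0)) :: l)) (fun s => r (s + 1)) t := by
  induction t with
  | zero => simp [probeHist]
  | succ t ih =>
    rw [probeHist, ih]
    simp [probeHist]

theorem win_strategy {V : Type*} {G : SimpleGraph V} {k : ℕ} {S : Set V} (h : Win G k S) :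
    ∃ A : CopStrategy V k, ∀ r, ValidTraj G r → r 0 ∈ S →
      ∃ t, ∀ r', ValidTraj G r' → r' 0 ∈ S →
        probeHist G A r' (t + 1) = probeHist G A r (t + 1) → r' t = r t := by
  classical
  induction h with
  | step S p h ih =>
    have key : ∀ α : Fin k → ℕ, ∃ A : CopStrategy V k,
        ¬ ({v | v ∈ S ∧ ∀ i, G.dist (p i) v = α i} : Set V).Subsingleton →
        ∀ r, ValidTraj G r → r 0 ∈ nbhd G {v | v ∈ S ∧ ∀ i, G.dist (p i) v = α i} →
        ∃ t, ∀ r', ValidTraj G r' → r' 0 ∈ nbhd G {v | v ∈ S ∧ ∀ i, G.dist (p i) v = α i} →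
        probeHist G A r' (t + 1) = probeHist G A r (t + 1) → r' t = r t := by
      intro α
      by_cases hs : ({v | v ∈ S ∧ ∀ i, G.dist (p i) v = α i} : Set V).Subsingleton
      · exact ⟨fun _ => p, fun hn => absurd hs hn⟩
      · have hne : ∃ w ∈ S, ∀ i, G.dist (p i) w = α i := by
          by_contra hcon
          push Not at hcon
          apply hs
          intro a ha
          obtain ⟨i, hi⟩ := hcon a ha.1
          exact absurd (ha.2 i) hi
        obtain ⟨w, hw, hwα⟩ := hne
        have e : α = fun i => G.dist (p i) w := by funext i; exact (hwα i).symm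
        subst e
        obtain ⟨A, hA⟩ := ih w hw hs
        exact ⟨A, fun _ => hA⟩
    choose A hA using key
    let A' : CopStrategy V k := fun l => match l with
      | [] => p
      | α :: l => A α l
    refine ⟨A', ?_⟩
    intro r hr hr0
    set α : Fin k → ℕ := fun i => G.dist (p i) (r 0) with hα
    have hist : ∀ (q : ℕ → V) (t : ℕ), probeHist G A' q (t + 1) =
        (fun i => G.dist (p i) (q 0)) ::
          probeHist G (A (fun i => G.dist (p i) (q 0))) (fun s => q (s + 1)) t :=
      fun q t => probeHist_succ' G A' q t
    by_cases hs : ({v | v ∈ S ∧ ∀ i, G.dist (p i) v = α i} : Set V).Subsingleton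
    · refine ⟨0, ?_⟩
      intro r' hr' hr'0 he
      rw [hist, hist] at he
      have h1 := (List.cons.inj he).1
      exact hs ⟨hr'0, fun i => congrFun h1 i⟩ ⟨hr0, fun i => rfl⟩
    · obtain ⟨t, ht⟩ := hA α hs (fun s => r (s + 1)) (fun s => hr (s + 1))
        ⟨r 0, ⟨hr0, fun i => rfl⟩, hr 0⟩
      refine ⟨t + 1, ?_⟩
      intro r' hr' hr'0 he
      rw [hist, hist] at he
      obtain ⟨h1, h2⟩ := List.cons.inj he
      rw [h1] at h2
      exact ht (fun s => r' (s + 1)) (fun s => hr' (s + 1))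
        ⟨r' 0, ⟨hr'0, fun i => congrFun h1 i⟩, hr' 0⟩ h2

theorem Win.localizable {V : Type*} {G : SimpleGraph V} {k : ℕ} (h : Win G k Set.univ) :
    Localizable G k := by
  obtain ⟨A, hA⟩ := win_strategy h
  refine ⟨A, fun r hr => ?_⟩
  obtain ⟨t, ht⟩ := hA r hr (Set.mem_univ _)
  refine ⟨t, ?_⟩
  ext w
  constructor
  · rintro ⟨r', hr', he, rfl⟩
    exact ht r' hr' (Set.mem_univ _) he
  · rintro rfl
    exact ⟨r, hr, rfl, rfl⟩

/-- A family of nontrivial sets which the robber can maintain defeats the cops. -/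
theorem not_localizable_of_family {V : Type*} [Finite V] {G : SimpleGraph V} {k : ℕ}
    (F : Set V → Prop) (hnt : ∀ S, F S → S.Nontrivial)
    (h0 : ∀ p : Fin k → V, ∃ S, F S ∧ ∀ i, ∀ v ∈ S, ∀ w ∈ S, G.dist (p i) v = G.dist (p i) w)
    (hs : ∀ S, F S → ∀ p : Fin k → V, ∃ S', F S' ∧ S' ⊆ nbhd G S ∧
      ∀ i, ∀ v ∈ S', ∀ w ∈ S', G.dist (p i) v = G.dist (p i) w) :
    ¬ Localizable G k := by
  classical
  rintro ⟨A, hA⟩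
  choose S0 hS0 hS0c using h0
  choose S1 hS1 hS1s hS1c using hs
  let pt : {S : Set V // F S} → V := fun S => (hnt S.1 S.2).nonempty.some
  have hpt : ∀ S, pt S ∈ S.1 := fun S => (hnt S.1 S.2).nonempty.some_mem
  -- state: current set (after the probe) and the history before that probe
  let st : ℕ → {S : Set V // F S} × List (Fin k → ℕ) := fun n => Nat.rec
    (⟨S0 (A []), hS0 _⟩, [])
    (fun _ s =>
      let l := s.2 ++ [fun i => G.dist (A s.2 i) (pt s.1)]
      (⟨S1 s.1.1 s.1.2 (A l), hS1 _ _ _⟩, l)) n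
  have st0 : st 0 = (⟨S0 (A []), hS0 _⟩, []) := rfl
  have stS2 : ∀ n, (st (n+1)).2 = (st n).2 ++ [fun i => G.dist (A (st n).2 i) (pt (st n).1)] :=
    fun n => rfl
  have stS1 : ∀ n, (st (n+1)).1.1 = S1 (st n).1.1 (st n).1.2 (A (st (n+1)).2) := fun n => rfl
  have hsub : ∀ n, (st (n+1)).1.1 ⊆ nbhd G (st n).1.1 := by
    intro n; rw [stS1]; exact hS1s _ _ _
  have hconst : ∀ n, ∀ i, ∀ v ∈ (st n).1.1, ∀ w ∈ (st n).1.1,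
      G.dist (A (st n).2 i) v = G.dist (A (st n).2 i) w := by
    intro n
    cases n with
    | zero => exact hS0c _
    | succ n => rw [stS1]; exact hS1c _ _ _
  have hhist : ∀ (r : ℕ → V) (t : ℕ), (∀ s < t, r s ∈ (st s).1.1) → probeHist G A r t = (st t).2 := by
    intro r t
    induction t with
    | zero => intro _; rfl
    | succ t ih =>
      intro h
      rw [probeHist, ih (fun s hs => h s (by omega)), stS2]
      congr 2
      funext i
      exact hconst t i _ (h t (by omega)) _ (hpt _)
  have hpath : ∀ t, ∀ w ∈ (st t).1.1, ∃ r, ValidTraj G r ∧ (∀ s ≤ t, r s ∈ (st s).1.1) ∧ r t = w := by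
    intro t
    induction t with
    | zero =>
      intro w hw
      refine ⟨fun _ => w, fun _ => Or.inl rfl, ?_, rfl⟩
      intro s hs
      obtain rfl : s = 0 := by omega
      exact hw
    | succ t ih =>
      intro w hw
      obtain ⟨v, hv, hvw⟩ := hsub t hw
      obtain ⟨r, hr, hrs, hrt⟩ := ih v hv
      refine ⟨fun s => if s ≤ t then r s else w, ?_, ?_, ?_⟩
      · intro s
        by_cases h1 : s + 1 ≤ t
        · have h2 : s ≤ t := by omega
          simp only [h1, h2, if_true]; exact hr s
        · by_cases h2 : s ≤ t
          · obtain rfl : s = t := by omega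
            simp only [h1, le_refl, if_true, if_false, hrt]; exact hvw
          · simp [h1, h2]
      · intro s hs
        by_cases h2 : s ≤ t
        · simp only [h2, if_true]; exact hrs s h2
        · obtain rfl : s = t + 1 := by omega
          simpa using hw
      · simp
  have hinf : ∃ r, ValidTraj G r ∧ ∀ s, r s ∈ (st s).1.1 := by
    letI : TopologicalSpace V := ⊥
    haveI : DiscreteTopology V := ⟨rfl⟩
    let K : ℕ → Set (ℕ → V) := fun n => {r | ValidTraj G r} ∩ {r | ∀ s ≤ n, r s ∈ (st s).1.1}
    have hcl : ∀ n, IsClosed (K n) := by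
      intro n
      apply IsClosed.inter
      · have : {r : ℕ → V | ValidTraj G r} =
            ⋂ t, (fun r : ℕ → V => (r t, r (t+1))) ⁻¹' {q | q.2 = q.1 ∨ G.Adj q.1 q.2} := by
          ext r; simp [ValidTraj]
        rw [this]
        refine isClosed_iInter fun t => IsClosed.preimage ?_ (isClosed_discrete _)
        exact (continuous_apply t).prodMk (continuous_apply (t+1))
      · have : {r : ℕ → V | ∀ s ≤ n, r s ∈ (st s).1.1} =
            ⋂ s, ⋂ (_ : s ≤ n), (fun r : ℕ → V => r s) ⁻¹' (st s).1.1 := by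
          ext r; simp
        rw [this]
        exact isClosed_iInter fun s => isClosed_iInter fun _ =>
          IsClosed.preimage (continuous_apply s) (isClosed_discrete _)
    have hne := IsCompact.nonempty_iInter_of_sequence_nonempty_isCompact_isClosed K
      (fun n r hr => ⟨hr.1, fun s hs => hr.2 s (by omega)⟩)
      (fun n => by
        obtain ⟨r, h1, h2, _⟩ := hpath n _ (hpt (st n).1)
        exact ⟨r, h1, h2⟩)
      (hcl 0).isCompact hcl
    obtain ⟨r, hr⟩ := hne
    rw [Set.mem_iInter] at hr
    exact ⟨r, (hr 0).1, fun s => (hr s).2 s le_rfl⟩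
  obtain ⟨r, hr, hrs⟩ := hinf
  obtain ⟨t, ht⟩ := hA r hr
  obtain ⟨w, hw, hne⟩ := (hnt _ (st t).1.2).exists_ne (r t)
  obtain ⟨r', h1, h2, h3⟩ := hpath t w hw
  have : w ∈ RSet G A r t := by
    refine ⟨r', h1, ?_, h3⟩
    rw [hhist r' (t+1) (fun s hs => h2 s (by omega)), hhist r (t+1) (fun s _ => hrs s)]
  rw [ht] at this
  exact hne this

/-- bipartite data -/
structure Bip (U B : Type) where
  R : U → B → Prop
  bs : B
  hbs : ∀ u, R u bs
  A : Set U
  hA : ∀ a ∈ A, ∀ b, R a b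
  a0 : U
  ha0 : a0 ∈ A

/-- a coordinate description of the `m`-subdivision of a bipartite graph -/
structure SubModel {U B P : Type} (D : Bip U B) (H : SimpleGraph P) (m : ℕ) where
  hm : 1 ≤ m
  pt : U → B → ℕ → P
  surj : ∀ p, ∃ u b x, D.R u b ∧ x ≤ m ∧ p = pt u b x
  adj : ∀ p q, H.Adj p q ↔ ∃ u b x, D.R u b ∧ x < m ∧
    ((p = pt u b x ∧ q = pt u b (x + 1)) ∨ (q = pt u b x ∧ p = pt u b (x + 1)))
  inj : ∀ {u b x u' b' x'}, D.R u b → D.R u' b' → x ≤ m → x' ≤ m → pt u b x = pt u' b' x' →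
    x = x' ∧ (x < m → u = u') ∧ (0 < x → b = b')
  zero : ∀ {u b b'}, D.R u b → D.R u b' → pt u b 0 = pt u b' 0
  top : ∀ {u u' b}, D.R u b → D.R u' b → pt u b m = pt u' b m

theorem dist_of_potential {P : Type} {H : SimpleGraph P} (s : P) (f : P → ℕ)
    (h0 : ∀ v, f v = 0 ↔ v = s) (hl : ∀ p q, H.Adj p q → f q ≤ f p + 1)
    (hd : ∀ v, f v ≠ 0 → ∃ w, H.Adj v w ∧ f w < f v) :
    ∀ v, H.Reachable s v ∧ H.dist s v = f v := by
  have up : ∀ n v, f v ≤ n → ∃ w : H.Walk s v, w.length ≤ f v := by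
    intro n
    induction n with
    | zero =>
      intro v hv
      have : v = s := (h0 v).1 (by omega)
      subst this
      exact ⟨SimpleGraph.Walk.nil, by simp⟩
    | succ n ih =>
      intro v hv
      by_cases hz : f v = 0
      · exact ih v (by omega)
      · obtain ⟨w, hw, hlt⟩ := hd v hz
        obtain ⟨W, hW⟩ := ih w (by omega)
        refine ⟨W.concat hw.symm, ?_⟩
        rw [SimpleGraph.Walk.length_concat]
        omega
  have lo : ∀ a v (w : H.Walk a v), f v ≤ f a + w.length := by
    intro a v w
    induction w with
    | nil => simp
    | cons h w ih =>
      have := hl _ _ h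
      rw [SimpleGraph.Walk.length_cons]
      omega
  intro v
  obtain ⟨W, hW⟩ := up _ v le_rfl
  refine ⟨⟨W⟩, le_antisymm ((SimpleGraph.dist_le W).trans hW) ?_⟩
  obtain ⟨W', hW'⟩ := (SimpleGraph.Walk.reachable W).exists_walk_length_eq_dist
  have := lo _ _ W'
  have h00 := (h0 s).2 rfl
  omega

section dist
variable {U B P : Type} {D : Bip U B} {H : SimpleGraph P} {m : ℕ}

open Classical in
/-- the distance formula -/
noncomputable def del (D : Bip U B) (m : ℕ) (u' : U) (b' : B) (y : ℕ) (u : U) (b : B) (x : ℕ) : ℕ :=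
  if u = u' ∧ b = b' then (x - y) + (y - x) else
    min (min (y + (if u = u' then 0 else 2 * m) + x)
        (y + (if D.R u' b then m else 3 * m) + (m - x)))
      (min ((m - y) + (if D.R u b' then m else 3 * m) + x)
        ((m - y) + (if b = b' then 0 else 2 * m) + (m - x)))

set_option maxHeartbeats 2000000 in
theorem del_congr (hm : 1 ≤ m) {u' : U} {b' : B} {y : ℕ} {u u2 : U} {b b2 : B} {x : ℕ}
    (hy : y ≤ m) (hx : x ≤ m) (hR' : D.R u' b') (hR : D.R u b) (hR2 : D.R u2 b2)
    (h1 : x < m → u = u2) (h2 : 0 < x → b = b2) :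
    del D m u' b' y u b x = del D m u' b' y u2 b2 x := by
  rcases Nat.eq_zero_or_pos x with h0 | h0
  · subst h0
    obtain rfl := h1 (by omega)
    by_cases hu : u = u'
    · subst hu
      by_cases hb : b = b' <;> by_cases hb2 : b2 = b' <;> simp [del, *] <;> omega
    · by_cases hb : b = b'
      · subst hb
        by_cases hb2 : b2 = b
        · subst hb2; rfl
        · by_cases hc : D.R u' b2 <;> simp [del, *] <;> omega
      · by_cases hb2 : b2 = b'
        · subst hb2
          by_cases hc : D.R u' b <;> simp [del, *] <;> omega
        · by_cases hc : D.R u' b <;> by_cases hc2 : D.R u' b2 <;> by_cases hc3 : D.R u b' <;>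
            simp [del, *] <;> omega
  · obtain rfl := h2 h0
    by_cases hxm : x < m
    · rw [h1 hxm]
    · have : x = m := by omega
      subst this
      by_cases hb : b = b'
      · subst hb
        by_cases hu : u = u' <;> by_cases hu2 : u2 = u' <;> simp [del, *] <;> omega
      · by_cases hu : u = u'
        · subst hu
          by_cases hu2 : u2 = u
          · subst hu2; rfl
          · by_cases hc : D.R u2 b' <;> simp [del, *] <;> omega
        · by_cases hu2 : u2 = u'
          · subst hu2
            by_cases hc : D.R u b' <;> simp [del, *] <;> omega
          · by_cases hc : D.R u b' <;> by_cases hc2 : D.R u2 b' <;> by_cases hc3 : D.R u' b <;>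
              simp [del, *] <;> omega

theorem del_lip {u' : U} {b' : B} {y : ℕ} {u : U} {b : B} {x : ℕ} (hx : x < m) :
    del D m u' b' y u b x ≤ del D m u' b' y u b (x + 1) + 1 ∧
    del D m u' b' y u b (x + 1) ≤ del D m u' b' y u b x + 1 := by
  classical
  unfold del
  generalize (if u = u' then 0 else 2 * m) = c1 at *
  generalize (if D.R u' b then m else 3 * m) = c2 at *
  generalize (if D.R u b' then m else 3 * m) = c3 at *
  generalize (if b = b' then 0 else 2 * m) = c4 at *
  split_ifs <;> omega

set_option maxHeartbeats 2000000 in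
theorem del_mid {u' : U} {b' : B} {y : ℕ} {u : U} {b : B} {x : ℕ} (hx : x < m) (h0 : 0 < x)
    (hne : ¬ del D m u' b' y u b x = 0) :
    del D m u' b' y u b (x + 1) < del D m u' b' y u b x ∨
    del D m u' b' y u b (x - 1) < del D m u' b' y u b x := by
  classical
  unfold del at *
  generalize (if u = u' then 0 else 2 * m) = c1 at *
  generalize (if D.R u' b then m else 3 * m) = c2 at *
  generalize (if D.R u b' then m else 3 * m) = c3 at *
  generalize (if b = b' then 0 else 2 * m) = c4 at *
  split_ifs at * <;> omega

theorem del_zero (hm : 1 ≤ m) {u' : U} {b' : B} {y : ℕ} {u : U} {b : B} {x : ℕ} (hx : x ≤ m)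
    (hy : y ≤ m) (h : del D m u' b' y u b x = 0) :
    x = y ∧ (x < m → u = u') ∧ (0 < x → b = b') := by
  unfold del at h
  split_ifs at h with h1 h2 h3 h4 h5 <;>
    first
    | (refine ⟨by omega, fun _ => ?_, fun _ => ?_⟩ <;>
        first | exact h1.1 | exact h1.2 | assumption | (exfalso; omega))
    | (exfalso; omega)

theorem SubModel.dist_aux (M : SubModel D H m) {u' : U} {b' : B} {y : ℕ} (hR' : D.R u' b')
    (hy : y ≤ m) : ∀ {u : U} {b : B} {x : ℕ}, D.R u b → x ≤ m →
    H.Reachable (M.pt u' b' y) (M.pt u b x) ∧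
    H.dist (M.pt u' b' y) (M.pt u b x) = del D m u' b' y u b x := by
  have hm := M.hm
  choose cu cb cx hcR hcx hc using M.surj
  have hf : ∀ {u : U} {b : B} {x : ℕ}, D.R u b → x ≤ m →
      del D m u' b' y (cu (M.pt u b x)) (cb (M.pt u b x)) (cx (M.pt u b x)) =
        del D m u' b' y u b x := by
    intro u b x hR hx
    obtain ⟨h1, h2, h3⟩ := M.inj hR (hcR _) hx (hcx _) (hc (M.pt u b x))
    rw [← h1]
    exact (del_congr hm hy hx hR' hR (hcR _) h2 h3).symm
  have key := dist_of_potential (H := H) (M.pt u' b' y)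
    (fun p => del D m u' b' y (cu p) (cb p) (cx p)) ?_ ?_ ?_
  · intro u b x hR hx
    rw [← hf hR hx]
    exact key _
  · intro v
    constructor
    · intro h
      obtain ⟨h1, h2, h3⟩ := del_zero hm (hcx v) hy h
      rw [hc v]
      rcases Nat.eq_zero_or_pos (cx v) with h0 | h0
      · obtain h2 := h2 (by omega)
        rw [← h1, h0]
        have := hcR v
        rw [h2] at this ⊢
        exact M.zero this hR'
      · obtain h3 := h3 h0
        by_cases hxm : cx v < m
        · rw [h2 hxm, h3, h1]
        · have hxm : cx v = m := by have := hcx v; omega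
          rw [← h1, hxm, h3]
          have := hcR v
          rw [h3] at this
          exact M.top this hR'
    · rintro rfl
      show del D m u' b' y _ _ _ = 0
      rw [hf hR' hy]
      simp [del]
  · intro p q hpq
    obtain ⟨u, b, x, hR, hx, ⟨rfl, rfl⟩ | ⟨rfl, rfl⟩⟩ := (M.adj p q).1 hpq
    · show del D m u' b' y _ _ _ ≤ del D m u' b' y _ _ _ + 1
      rw [hf hR hx.le, hf hR (by omega)]
      exact (del_lip hx).2
    · show del D m u' b' y _ _ _ ≤ del D m u' b' y _ _ _ + 1
      rw [hf hR hx.le, hf hR (by omega)]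
      exact (del_lip hx).1
  · intro v hv
    obtain ⟨u, b, x, hR, hx, rfl⟩ := M.surj v
    have hv : ¬ del D m u' b' y _ _ _ = 0 := hv
    show ∃ w, H.Adj (M.pt u b x) w ∧ del D m u' b' y (cu w) (cb w) (cx w) < del D m u' b' y _ _ _
    rw [hf hR hx] at hv ⊢
    have A1 : ∀ {u b x}, D.R u b → x < m → H.Adj (M.pt u b x) (M.pt u b (x + 1)) :=
      fun hR hx => (M.adj _ _).2 ⟨_, _, _, hR, hx, Or.inl ⟨rfl, rfl⟩⟩
    rcases Nat.eq_zero_or_pos x with h0 | h0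
    · subst h0
      have hgo : ∀ b2, D.R u b2 → del D m u' b' y u b2 1 < del D m u' b' y u b2 0 →
        ∃ w, H.Adj (M.pt u b 0) w ∧ del D m u' b' y (cu w) (cb w) (cx w) <
          del D m u' b' y u b 0 := by
        intro b2 hb2 hlt
        refine ⟨M.pt u b2 1, ?_, ?_⟩
        · rw [M.zero hR hb2]; exact A1 hb2 (by omega)
        · rw [hf hb2 (by omega)]
          rwa [del_congr hm hy hx hR' hR hb2 (fun _ => rfl) (by omega)]
      by_cases hub : D.R u b'
      · rw [del_congr hm hy hx hR' hR hub (fun _ => rfl) (by omega)] at hv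
        apply hgo b' hub
        by_cases hu : u = u'
        · subst hu
          simp [del] at hv ⊢
          omega
        · simp [del, *] at hv ⊢
          omega
      · have hu : u ≠ u' := by rintro rfl; exact hub hR'
        have hb : b ≠ b' := by rintro rfl; exact hub hR
        have hb : D.bs ≠ b' := by rintro rfl; exact hub (D.hbs u)
        apply hgo _ (D.hbs u)
        have := D.hbs u'
        simp [del, *]
        omega
    · by_cases hxm : x < m
      · rcases del_mid hxm h0 hv with h | h
        · exact ⟨_, A1 hR hxm, by rwa [hf hR (by omega)]⟩
        · refine ⟨M.pt u b (x - 1), ?_, by rwa [hf hR (by omega)]⟩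
          have := A1 (x := x - 1) hR (by omega)
          rw [show x - 1 + 1 = x by omega] at this
          exact this.symm
      · obtain rfl : x = m := by omega
        have hgo : ∀ u2, D.R u2 b → del D x u' b' y u2 b (x - 1) < del D x u' b' y u2 b x →
          ∃ w, H.Adj (M.pt u b x) w ∧ del D x u' b' y (cu w) (cb w) (cx w) <
            del D x u' b' y u b x := by
          intro u2 hu2 hlt
          refine ⟨M.pt u2 b (x - 1), ?_, ?_⟩
          · rw [M.top hR hu2]
            have := A1 (x := x - 1) hu2 (by omega)
            rw [show x - 1 + 1 = x by omega] at this
            exact this.symm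
          · rw [hf hu2 (by omega)]
            rwa [del_congr hm hy hx hR' hR hu2 (by omega) (fun _ => rfl)]
        by_cases hub : D.R u' b
        · rw [del_congr hm hy hx hR' hR hub (by omega) (fun _ => rfl)] at hv
          apply hgo u' hub
          by_cases hu : b = b'
          · subst hu
            simp [del] at hv ⊢
            omega
          · simp [del, *] at hv ⊢
            omega
        · have hu : b ≠ b' := by rintro rfl; exact hub hR'
          have hb : D.a0 ≠ u' := by intro h; apply hub; rw [← h]; exact D.hA _ D.ha0 b
          apply hgo _ (D.hA _ D.ha0 b)
          have := D.hA _ D.ha0 b'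
          simp [del, *]
          omega

theorem SubModel.dist_eq (M : SubModel D H m) {u' u : U} {b' b : B} {y x : ℕ} (hR' : D.R u' b')
    (hy : y ≤ m) (hR : D.R u b) (hx : x ≤ m) :
    H.dist (M.pt u' b' y) (M.pt u b x) = del D m u' b' y u b x :=
  (M.dist_aux hR' hy hR hx).2

theorem SubModel.connected (M : SubModel D H m) : H.Connected := by
  have : Nonempty P := ⟨M.pt D.a0 D.bs 0⟩
  refine ⟨fun p q => ?_⟩
  obtain ⟨u, b, x, hR, hx, rfl⟩ := M.surj p
  obtain ⟨u', b', x', hR', hx', rfl⟩ := M.surj q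
  exact (M.dist_aux hR hx hR' hx').1

end dist

section cop
variable {U B P : Type} {D : Bip U B} {H : SimpleGraph P} {m : ℕ}

theorem SubModel.pt_adj (M : SubModel D H m) {u : U} {b : B} {x : ℕ} (hR : D.R u b) (hx : x < m) :
    H.Adj (M.pt u b x) (M.pt u b (x + 1)) :=
  (M.adj _ _).2 ⟨_, _, _, hR, hx, Or.inl ⟨rfl, rfl⟩⟩

/-- the cops have located the robber, or win after the next robber move -/
def Done (H : SimpleGraph P) (K : Set P) : Prop := ¬ K.Subsingleton → Win H 1 (nbhd H K)

theorem Done.mono {K K' : Set P} (h : Done H K') (hs : K ⊆ K') : Done H K := fun hK =>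
  (h (fun h' => hK (h'.anti hs))).mono (nbhd_mono H hs)

/-- vertices at phase `x` on threads between `C` and `S` -/
def SubModel.Xs (M : SubModel D H m) (C : Set U) (S : Set B) (x : ℕ) : Set P :=
  {p | ∃ u ∈ C, ∃ b ∈ S, D.R u b ∧ p = M.pt u b x}

theorem SubModel.mem_nbhd (M : SubModel D H m) {C : Set U} {S : Set B} {x : ℕ} (hx : x ≤ m) {v : P}
    (hv : v ∈ nbhd H (M.Xs C S x)) :
    ∃ u b x', D.R u b ∧ x ≤ x' + 1 ∧ x' ≤ x + 1 ∧ x' ≤ m ∧ (x < m → u ∈ C) ∧ (0 < x → b ∈ S) ∧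
      v = M.pt u b x' := by
  obtain ⟨p, ⟨u, hu, b, hb, hR, rfl⟩, rfl | hadj⟩ := hv
  · exact ⟨u, b, x, hR, by omega, by omega, hx, fun _ => hu, fun _ => hb, rfl⟩
  · obtain ⟨u2, b2, x2, hR2, hx2, ⟨h1, rfl⟩ | ⟨rfl, h1⟩⟩ := (M.adj _ _).1 hadj
    · obtain ⟨e, h3, h4⟩ := M.inj hR hR2 hx hx2.le h1
      refine ⟨u2, b2, x2 + 1, hR2, by omega, by omega, by omega, fun h => ?_, fun h => ?_, rfl⟩
      · rw [← h3 h]; exact hu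
      · rw [← h4 h]; exact hb
    · obtain ⟨e, h3, h4⟩ := M.inj hR hR2 hx (by omega) h1
      refine ⟨u2, b2, x2, hR2, by omega, by omega, by omega, fun h => ?_, fun h => ?_, rfl⟩
      · rw [← h3 h]; exact hu
      · rw [← h4 h]; exact hb

theorem SubModel.done_of_probe (M : SubModel D H m) {C : Set U} {S : Set B} {x : ℕ} (hx : x ≤ m)
    (u' : U) (b' : B) (y : ℕ) (hR' : D.R u' b') (hy : y ≤ m)
    (h : ∀ uw bw xw, D.R uw bw → x ≤ xw + 1 → xw ≤ x + 1 → xw ≤ m → (x < m → uw ∈ C) →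
      (0 < x → bw ∈ S) → ∃ K, Done H K ∧ ∀ u b x', D.R u b → x ≤ x' + 1 → x' ≤ x + 1 → x' ≤ m →
        (x < m → u ∈ C) → (0 < x → b ∈ S) →
        del D m u' b' y u b x' = del D m u' b' y uw bw xw → M.pt u b x' ∈ K) :
    Done H (M.Xs C S x) := by
  intro _
  refine Win.step _ (fun _ => M.pt u' b' y) ?_
  intro w hw
  obtain ⟨uw, bw, xw, h1, h2, h3, h4, h5, h6, rfl⟩ := M.mem_nbhd hx hw
  obtain ⟨K, hK, hsub⟩ := h uw bw xw h1 h2 h3 h4 h5 h6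
  refine hK.mono ?_
  rintro v ⟨hv, he⟩
  obtain ⟨u, b, x', g1, g2, g3, g4, g5, g6, rfl⟩ := M.mem_nbhd hx hv
  refine hsub u b x' g1 g2 g3 g4 g5 g6 ?_
  have := he 0
  rwa [M.dist_eq hR' hy g1 g4, M.dist_eq hR' hy h1 h4] at this

open Classical in
theorem del_U (u' u : U) (b : B) (x : ℕ) (hx : x ≤ m) (hR : D.R u b) :
    del D m u' D.bs 0 u b x = if u = u' then x else if D.R u' b then 2 * m - x else 2 * m + x := by
  have h1 := D.hbs u
  have h2 := D.hbs u'
  by_cases hu : u = u'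
  · subst hu
    by_cases hb : b = D.bs <;> simp [del, *] <;> omega
  · by_cases hb : b = D.bs
    · subst hb
      simp [del, *] <;> omega
    · by_cases hr : D.R u' b <;> simp [del, *] <;> omega

open Classical in
theorem del_B (b' : B) (u : U) (b : B) (x : ℕ) (hx : x ≤ m) (hR : D.R u b) :
    del D m D.a0 b' m u b x = if b = b' then m - x else if D.R u b' then m + x else 3 * m - x := by
  have h1 := D.hA _ D.ha0
  by_cases hb : b = b'
  · subst hb
    by_cases hu : u = D.a0 <;> simp [del, *] <;> omega
  · by_cases hu : u = D.a0
    · subst hu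
      simp [del, *] <;> omega
    · by_cases hr : D.R u b' <;> simp [del, *] <;> omega

open Classical in
theorem del_Z (hm : 3 ≤ m) (u' u : U) (b : B) (x : ℕ) (hx : x ≤ 1) (hR : D.R u b) :
    del D m u' D.bs 1 u b x = if u = u' then (if x = 0 then 1 else if b = D.bs then 0 else 2)
      else (if x = 0 then 2 * m - 1 else if b = D.bs then 2 * m - 2 else 2 * m) := by
  have h1 := D.hbs u
  have h2 := D.hbs u'
  obtain rfl | rfl : x = 0 ∨ x = 1 := by omega
  all_goals
  by_cases hu : u = u'
  · subst hu
    by_cases hb : b = D.bs <;> simp [del, *] <;> omega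
  · by_cases hb : b = D.bs
    · subst hb
      simp [del, *] <;> omega
    · by_cases hr : D.R u' b <;> simp [del, *] <;> omega

theorem U_info {u' u u2 : U} {b b2 : B} {x x2 : ℕ} (hm : 1 ≤ m)
    (hx : x ≤ m) (hR : D.R u b) (hx2 : x2 ≤ m)
    (hR2 : D.R u2 b2) (h : del D m u' D.bs 0 u b x = del D m u' D.bs 0 u2 b2 x2) :
    x = x2 ∧ (x < m → (u = u' ↔ u2 = u')) ∧ (0 < x → (D.R u' b ↔ D.R u' b2)) := by
  rw [del_U _ _ _ _ hx hR, del_U _ _ _ _ hx2 hR2] at h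
  by_cases hu : u = u' <;> by_cases hu2 : u2 = u' <;> by_cases h1 : D.R u' b <;>
    by_cases h2 : D.R u' b2 <;> simp [*] at h ⊢ <;> first | omega | (subst_vars; contradiction)

theorem B_info {u u2 : U} {b' b b2 : B} {x x2 : ℕ} (hm : 1 ≤ m)
    (hx : x ≤ m) (hR : D.R u b) (hx2 : x2 ≤ m)
    (hR2 : D.R u2 b2) (h : del D m D.a0 b' m u b x = del D m D.a0 b' m u2 b2 x2) :
    x = x2 ∧ (0 < x → (b = b' ↔ b2 = b')) := by
  rw [del_B _ _ _ _ hx hR, del_B _ _ _ _ hx2 hR2] at h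
  by_cases hu : b = b' <;> by_cases hu2 : b2 = b' <;> by_cases h1 : D.R u b' <;>
    by_cases h2 : D.R u2 b' <;> simp [*] at h ⊢ <;> first | omega | (subst_vars; contradiction)

theorem Z_info {u' u u2 : U} {b b2 : B} {x x2 : ℕ} (hm : 3 ≤ m)
    (hx : x ≤ 1) (hR : D.R u b) (hx2 : x2 ≤ 1)
    (hR2 : D.R u2 b2) (h : del D m u' D.bs 1 u b x = del D m u' D.bs 1 u2 b2 x2) :
    x = x2 ∧ (u = u' ↔ u2 = u') ∧ (x = 1 → (b = D.bs ↔ b2 = D.bs)) := by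
  rw [del_Z hm _ _ _ _ hx hR, del_Z hm _ _ _ _ hx2 hR2] at h
  by_cases hu : u = u' <;> by_cases hu2 : u2 = u' <;> by_cases h1 : b = D.bs <;>
    by_cases h2 : b2 = D.bs <;> obtain rfl | rfl : x = 0 ∨ x = 1 := by omega
  all_goals
    obtain rfl | rfl : x2 = 0 ∨ x2 = 1 := by omega
  all_goals
    simp only [hu, hu2, h1, h2] at h ⊢
    simp at h ⊢
    try omega

open Classical in
theorem del_S (hm : 4 ≤ m) {t : U} {b1 b2 b3 : B} (h1 : D.R t b1) (h2 : D.R t b2)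
    (h3 : ¬ D.R t b3) (h12 : b1 ≠ b2) (u : U) (b : B) (x : ℕ) (hx : x ≤ m) (hx2 : m ≤ x + 2)
    (hR : D.R u b) (hb : b = b1 ∨ b = b2 ∨ b = b3) :
    del D m t b1 2 u b x = if b = b1 then (if u = t then x - 2 else 2 * m - 2 - x)
      else if b = b2 then (if u = t then min (2 + x) (2 * m + 2 - x) else 2 * m + 2 - x)
      else (if D.R u b1 then min (2 * m - 2 + x) (4 * m - 2 - x)
        else min (2 * m + 2 + x) (4 * m - 2 - x)) := by
  have h21 := h12.symm
  rcases hb with rfl | rfl | rfl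
  · by_cases hu : u = t <;> simp [del, *] <;> omega
  · by_cases hu : u = t
    · subst hu; simp [del, *] <;> omega
    · by_cases hr : D.R u b1 <;> simp [del, *] <;> omega
  · have hu : u ≠ t := by rintro rfl; exact h3 hR
    have hb1 : b ≠ b1 := by rintro rfl; exact h3 h1
    have hb2 : b ≠ b2 := by rintro rfl; exact h3 h2
    by_cases hr : D.R u b1 <;> simp [del, *] <;> omega

theorem S_info (hm : 4 ≤ m) {t : U} {b1 b2 b3 : B} (h1 : D.R t b1) (h2 : D.R t b2)
    (h3 : ¬ D.R t b3) (h12 : b1 ≠ b2) {u : U} {b : B} {x : ℕ} (hx : x ≤ m) (hx2 : m ≤ x + 2)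
    (hR : D.R u b) (hb : b = b1 ∨ b = b2 ∨ b = b3) {u' : U} {b' : B} {x' : ℕ} (hx' : x' ≤ m)
    (hx2' : m ≤ x' + 2) (hR' : D.R u' b') (hb' : b' = b1 ∨ b' = b2 ∨ b' = b3)
    (h : del D m t b1 2 u b x = del D m t b1 2 u' b' x') :
    x = x' ∧ (m ≤ x + 1 → b = b') := by
  rw [del_S hm h1 h2 h3 h12 _ _ _ hx hx2 hR hb, del_S hm h1 h2 h3 h12 _ _ _ hx' hx2' hR' hb'] at h
  have e21 : b2 ≠ b1 := h12.symm
  have e31 : b3 ≠ b1 := by rintro rfl; exact h3 h1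
  have e32 : b3 ≠ b2 := by rintro rfl; exact h3 h2
  obtain ⟨d, hd⟩ : ∃ d, x + d = m := ⟨m - x, by omega⟩
  obtain ⟨d', hd'⟩ : ∃ d, x' + d = m := ⟨m - x', by omega⟩
  rcases hb with rfl | rfl | rfl <;> rcases hb' with rfl | rfl | rfl
  · simp at h ⊢
    split_ifs at h <;> omega
  all_goals
    simp [*] at h ⊢
    try split_ifs at h
  all_goals
    try omega

/-- clean depth -/
inductive CD (D : Bip U B) : ℕ → Set B → Prop
  | zero (n : ℕ) (S : Set B) : S.Subsingleton → CD D n S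
  | split (n : ℕ) (S : Set B) (u : U) : CD D n {b | b ∈ S ∧ D.R u b} →
      CD D n {b | b ∈ S ∧ ¬ D.R u b} → CD D (n + 1) S
  | hit (n : ℕ) (S : Set B) (b : B) : CD D n (S \ {b}) → CD D (n + 1) S

/-- depth with the special final probe -/
inductive TD (D : Bip U B) : ℕ → Set B → Prop
  | base (S : Set B) (t : U) (b1 b2 b3 : B) : D.R t b1 → D.R t b2 → ¬ D.R t b3 → b1 ≠ b2 →
      (∀ b ∈ S, b = b1 ∨ b = b2 ∨ b = b3) → TD D 0 S
  | split (n : ℕ) (S : Set B) (u : U) : TD D n {b | b ∈ S ∧ D.R u b} →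
      TD D n {b | b ∈ S ∧ ¬ D.R u b} → TD D (n + 1) S

theorem TD.toCD {n : ℕ} {S : Set B} (h : TD D n S) : CD D (n + 2) S := by
  induction h with
  | base S t b1 b2 b3 h1 h2 h3 h12 hS =>
    refine CD.split 1 S t (CD.hit 0 _ b1 (CD.zero _ _ ?_)) (CD.zero _ _ ?_)
    · rintro b ⟨⟨hb, hR⟩, hne⟩ b' ⟨⟨hb', hR'⟩, hne'⟩
      simp only [Set.mem_singleton_iff] at hne hne'
      rcases hS b hb with rfl | rfl | rfl
      · exact absurd rfl hne
      · rcases hS b' hb' with rfl | rfl | rfl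
        · exact absurd rfl hne'
        · rfl
        · exact absurd hR' h3
      · exact absurd hR h3
    · rintro b ⟨hb, hR⟩ b' ⟨hb', hR'⟩
      rcases hS b hb with rfl | rfl | rfl
      · exact absurd h1 hR
      · exact absurd h2 hR
      · rcases hS b' hb' with rfl | rfl | rfl
        · exact absurd h1 hR'
        · exact absurd h2 hR'
        · rfl
  | split n S u _ _ ih1 ih2 => exact CD.split _ _ u ih1 ih2

theorem CD.sub_of_zero {S : Set B} (h : CD D 0 S) : S.Subsingleton := by
  cases h with
  | zero _ _ h => exact h

theorem SubModel.Xs_top (M : SubModel D H m) {C : Set U} {S : Set B} (hS : S.Subsingleton) :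
    Done H (M.Xs C S m) := by
  intro h
  refine absurd ?_ h
  rintro p ⟨u, hu, b, hb, hR, rfl⟩ q ⟨u', hu', b', hb', hR', rfl⟩
  obtain rfl := hS hb hb'
  exact M.top hR hR'

theorem SubModel.Xs_bot (M : SubModel D H m) {C : Set U} {S : Set B} (hS : C.Subsingleton) :
    Done H (M.Xs C S 0) := by
  intro h
  refine absurd ?_ h
  rintro p ⟨u, hu, b, hb, hR, rfl⟩ q ⟨u', hu', b', hb', hR', rfl⟩
  obtain rfl := hS hu hu'
  exact M.zero hR hR'

theorem SubModel.Xs_sub (M : SubModel D H m) {C : Set U} {S : Set B} (hC : C.Subsingleton)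
    (hS : S.Subsingleton) (x : ℕ) : Done H (M.Xs C S x) := by
  intro h
  refine absurd ?_ h
  rintro p ⟨u, hu, b, hb, hR, rfl⟩ q ⟨u', hu', b', hb', hR', rfl⟩
  obtain rfl := hC hu hu'
  obtain rfl := hS hb hb'
  rfl

theorem SubModel.cd_done (M : SubModel D H m) {C : Set U} (hZ : Done H (M.Xs C Set.univ 0))
    (hsm : ¬ C.Subsingleton →
      ∃ u' ∈ C, (∀ S : Set B, S.Subsingleton → ∀ x, 1 ≤ x → x < m →
        Done H (M.Xs {u'} S x) ∧ Done H (M.Xs (C \ {u'}) S x)))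
    {n : ℕ} {S : Set B} (h : CD D n S) : ∀ x, 1 ≤ x → x < m → n + x ≤ m → Done H (M.Xs C S x) := by
  have hm := M.hm
  have zc : ∀ S : Set B, S.Subsingleton → ∀ x, 1 ≤ x → x < m → Done H (M.Xs C S x) := by
    intro S hS x hx1 hxm
    by_cases hC : C.Subsingleton
    · exact M.Xs_sub hC hS x
    · obtain ⟨u', hu', hI⟩ := hsm hC
      refine M.done_of_probe hxm.le u' D.bs 0 (D.hbs _) (by omega) ?_
      intro uw bw xw h1 h2 h3 h4 h5 h6
      rcases Nat.eq_zero_or_pos xw with h0 | h0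
      · refine ⟨_, hZ, ?_⟩
        intro u b x' g1 g2 g3 g4 g5 g6 he
        obtain ⟨e1, e2, e3⟩ := U_info hm g4 g1 h4 h1 he
        exact ⟨u, g5 hxm, b, trivial, g1, by rw [e1, h0]⟩
      · by_cases hxw : xw = m
        · subst hxw
          refine ⟨_, M.Xs_top (C := C) hS, ?_⟩
          intro u b x' g1 g2 g3 g4 g5 g6 he
          obtain ⟨e1, e2, e3⟩ := U_info hm g4 g1 h4 h1 he
          exact ⟨u, g5 hxm, b, g6 hx1, g1, by rw [e1]⟩
        · obtain ⟨k1, k2⟩ := hI S hS xw h0 (by omega)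
          by_cases hu : uw = u'
          · refine ⟨_, k1, ?_⟩
            intro u b x' g1 g2 g3 g4 g5 g6 he
            obtain ⟨e1, e2, e3⟩ := U_info hm g4 g1 h4 h1 he
            exact ⟨u, (e2 (by omega)).2 hu, b, g6 hx1, g1, by rw [e1]⟩
          · refine ⟨_, k2, ?_⟩
            intro u b x' g1 g2 g3 g4 g5 g6 he
            obtain ⟨e1, e2, e3⟩ := U_info hm g4 g1 h4 h1 he
            exact ⟨u, ⟨g5 hxm, fun h => hu ((e2 (by omega)).1 h)⟩, b, g6 hx1, g1, by rw [e1]⟩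
  induction h with
  | zero n S hS => exact fun x hx1 hxm _ => zc S hS x hx1 hxm
  | split n S u' hc1 hc2 ih1 ih2 =>
    intro x hx1 hxm hn
    refine M.done_of_probe hxm.le u' D.bs 0 (D.hbs _) (by omega) ?_
    intro uw bw xw h1 h2 h3 h4 h5 h6
    rcases Nat.eq_zero_or_pos xw with h0 | h0
    · refine ⟨_, hZ, ?_⟩
      intro u b x' g1 g2 g3 g4 g5 g6 he
      obtain ⟨e1, e2, e3⟩ := U_info hm g4 g1 h4 h1 he
      exact ⟨u, g5 hxm, b, trivial, g1, by rw [e1, h0]⟩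
    · have fin : ∀ S', CD D n S' → (∀ x, 1 ≤ x → x < m → n + x ≤ m → Done H (M.Xs C S' x)) →
          Done H (M.Xs C S' xw) := by
        intro S' hS' ih
        by_cases hxw : xw = m
        · subst hxw
          obtain rfl : n = 0 := by omega
          exact M.Xs_top hS'.sub_of_zero
        · exact ih xw h0 (by omega) (by omega)
      by_cases hr : D.R u' bw
      · refine ⟨_, fin _ hc1 ih1, ?_⟩
        intro u b x' g1 g2 g3 g4 g5 g6 he
        obtain ⟨e1, e2, e3⟩ := U_info hm g4 g1 h4 h1 he
        exact ⟨u, g5 hxm, b, ⟨g6 hx1, (e3 (by omega)).2 hr⟩, g1, by rw [e1]⟩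
      · refine ⟨_, fin _ hc2 ih2, ?_⟩
        intro u b x' g1 g2 g3 g4 g5 g6 he
        obtain ⟨e1, e2, e3⟩ := U_info hm g4 g1 h4 h1 he
        exact ⟨u, g5 hxm, b, ⟨g6 hx1, fun h => hr ((e3 (by omega)).1 h)⟩, g1, by rw [e1]⟩
  | hit n S b' hc ih =>
    intro x hx1 hxm hn
    refine M.done_of_probe hxm.le D.a0 b' m (D.hA _ D.ha0 _) le_rfl ?_
    intro uw bw xw h1 h2 h3 h4 h5 h6
    rcases Nat.eq_zero_or_pos xw with h0 | h0
    · refine ⟨_, hZ, ?_⟩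
      intro u b x' g1 g2 g3 g4 g5 g6 he
      obtain ⟨e1, e3⟩ := B_info hm g4 g1 h4 h1 he
      exact ⟨u, g5 hxm, b, trivial, g1, by rw [e1, h0]⟩
    · by_cases hr : bw = b'
      · have fin : Done H (M.Xs C {b'} xw) := by
          by_cases hxw : xw = m
          · subst hxw
            exact M.Xs_top Set.subsingleton_singleton
          · exact zc _ Set.subsingleton_singleton _ h0 (by omega)
        refine ⟨_, fin, ?_⟩
        intro u b x' g1 g2 g3 g4 g5 g6 he
        obtain ⟨e1, e3⟩ := B_info hm g4 g1 h4 h1 he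
        exact ⟨u, g5 hxm, b, (e3 (by omega)).2 hr, g1, by rw [e1]⟩
      · have fin : Done H (M.Xs C (S \ {b'}) xw) := by
          by_cases hxw : xw = m
          · subst hxw
            obtain rfl : n = 0 := by omega
            exact M.Xs_top hc.sub_of_zero
          · exact ih xw h0 (by omega) (by omega)
        refine ⟨_, fin, ?_⟩
        intro u b x' g1 g2 g3 g4 g5 g6 he
        obtain ⟨e1, e3⟩ := B_info hm g4 g1 h4 h1 he
        exact ⟨u, g5 hxm, b, ⟨g6 hx1, fun h => hr ((e3 (by omega)).1 h)⟩, g1, by rw [e1]⟩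

end cop

section cop2
variable {U B P : Type} {D : Bip U B} {H : SimpleGraph P} {m : ℕ}

theorem SubModel.td_done (M : SubModel D H m) (hm4 : 4 ≤ m) {C : Set U}
    (hZ : Done H (M.Xs C Set.univ 0))
    (hcd : ∀ (n : ℕ) (S : Set B), CD D n S → ∀ x, 1 ≤ x → x < m → n + x ≤ m → Done H (M.Xs C S x))
    {n : ℕ} {S : Set B} (h : TD D n S) : ∀ x, 1 ≤ x → n + x + 1 = m → Done H (M.Xs C S x) := by
  have hm := M.hm
  induction h with
  | base S t b1 b2 b3 r1 r2 r3 h12 hS =>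
    intro x hx1 hn
    have hxm : x < m := by omega
    have hcd2 := (TD.base S t b1 b2 b3 r1 r2 r3 h12 hS).toCD
    refine M.done_of_probe hxm.le t b1 2 r1 (by omega) ?_
    intro uw bw xw h1 h2 h3 h4 h5 h6
    by_cases hxw : xw + 2 = m
    · refine ⟨_, hcd _ _ hcd2 xw (by omega) (by omega) (by omega), ?_⟩
      intro u b x' g1 g2 g3 g4 g5 g6 he
      obtain ⟨e1, e2⟩ := S_info hm4 r1 r2 r3 h12 g4 (by omega) g1 (hS _ (g6 hx1)) h4 (by omega) h1
        (hS _ (h6 hx1)) he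
      exact ⟨u, g5 hxm, b, g6 hx1, g1, by rw [e1]⟩
    · have fin : Done H (M.Xs C {bw} xw) := by
        by_cases hxw : xw = m
        · subst hxw
          exact M.Xs_top Set.subsingleton_singleton
        · exact hcd 0 _ (CD.zero _ _ Set.subsingleton_singleton) _ (by omega) (by omega) (by omega)
      refine ⟨_, fin, ?_⟩
      intro u b x' g1 g2 g3 g4 g5 g6 he
      obtain ⟨e1, e2⟩ := S_info hm4 r1 r2 r3 h12 g4 (by omega) g1 (hS _ (g6 hx1)) h4 (by omega) h1
        (hS _ (h6 hx1)) he
      exact ⟨u, g5 hxm, b, e2 (by omega), g1, by rw [e1]⟩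
  | split n S u' hc1 hc2 ih1 ih2 =>
    intro x hx1 hn
    have hxm : x < m := by omega
    refine M.done_of_probe hxm.le u' D.bs 0 (D.hbs _) (by omega) ?_
    intro uw bw xw h1 h2 h3 h4 h5 h6
    rcases Nat.eq_zero_or_pos xw with h0 | h0
    · refine ⟨_, hZ, ?_⟩
      intro u b x' g1 g2 g3 g4 g5 g6 he
      obtain ⟨e1, e2, e3⟩ := U_info hm g4 g1 h4 h1 he
      exact ⟨u, g5 hxm, b, trivial, g1, by rw [e1, h0]⟩
    · have fin : ∀ S', TD D n S' → (∀ x, 1 ≤ x → n + x + 1 = m → Done H (M.Xs C S' x)) →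
          Done H (M.Xs C S' xw) := by
        intro S' hS' ih
        by_cases hxw : xw = x + 1
        · exact ih xw h0 (by omega)
        · exact hcd _ _ hS'.toCD xw h0 (by omega) (by omega)
      by_cases hr : D.R u' bw
      · refine ⟨_, fin _ hc1 ih1, ?_⟩
        intro u b x' g1 g2 g3 g4 g5 g6 he
        obtain ⟨e1, e2, e3⟩ := U_info hm g4 g1 h4 h1 he
        exact ⟨u, g5 hxm, b, ⟨g6 hx1, (e3 (by omega)).2 hr⟩, g1, by rw [e1]⟩
      · refine ⟨_, fin _ hc2 ih2, ?_⟩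
        intro u b x' g1 g2 g3 g4 g5 g6 he
        obtain ⟨e1, e2, e3⟩ := U_info hm g4 g1 h4 h1 he
        exact ⟨u, g5 hxm, b, ⟨g6 hx1, fun h => hr ((e3 (by omega)).1 h)⟩, g1, by rw [e1]⟩

theorem SubModel.main_done [Finite U] (M : SubModel D H m) (hm3 : 3 ≤ m)
    (hB : CD D (m - 1) (Set.univ \ {D.bs}) ∨ (4 ≤ m ∧ TD D (m - 2) (Set.univ \ {D.bs}))) :
    ∀ (n : ℕ) (C : Set U), C.ncard ≤ n → Done H (M.Xs C Set.univ 0) ∧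
      ∀ (n : ℕ) (S : Set B), CD D n S → ∀ x, 1 ≤ x → x < m → n + x ≤ m → Done H (M.Xs C S x) := by
  intro n
  induction n with
  | zero =>
    intro C hC
    have hC0 : C = ∅ := by
      rw [← Set.ncard_eq_zero]; omega
    subst hC0
    refine ⟨M.Xs_bot Set.subsingleton_empty, ?_⟩
    intro n S _ x _ _ _ h
    refine absurd ?_ h
    rintro p ⟨u, hu, _⟩
    exact absurd hu (by simp)
  | succ n ih =>
    intro C hC
    have small : ∀ u' ∈ C, ¬ C.Subsingleton → ({u'} : Set U).ncard ≤ n ∧ (C \ {u'}).ncard ≤ n := by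
      intro u' hu' hns
      have h1 := Set.ncard_sdiff_singleton_add_one hu'
      have h2 : 1 < C.ncard := by
        rw [Set.one_lt_ncard_iff_nontrivial]
        exact Set.not_subsingleton_iff.1 hns
      rw [Set.ncard_singleton]
      omega
    have hfull : ∀ C' : Set U, C'.ncard ≤ n → Done H (M.Xs C' (Set.univ \ {D.bs}) 1) := by
      intro C' hC'
      obtain ⟨z, c⟩ := ih C' hC'
      rcases hB with h | ⟨h4, h⟩
      · exact c _ _ h 1 le_rfl (by omega) (by omega)
      · exact M.td_done h4 z c h 1 le_rfl (by omega)
    have hbs1 : ∀ C' : Set U, C'.ncard ≤ n → Done H (M.Xs C' {D.bs} 1) := by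
      intro C' hC'
      exact (ih C' hC').2 0 _ (CD.zero _ _ Set.subsingleton_singleton) 1 le_rfl (by omega) (by omega)
    have hZ : Done H (M.Xs C Set.univ 0) := by
      by_cases hns : C.Subsingleton
      · exact M.Xs_bot hns
      · obtain ⟨u', hu', _⟩ := Set.not_subsingleton_iff.1 hns
        obtain ⟨s1, s2⟩ := small u' hu' hns
        refine M.done_of_probe (by omega) u' D.bs 1 (D.hbs _) (by omega) ?_
        intro uw bw xw h1 h2 h3 h4 h5 h6
        have fin : ∀ C' : Set U, C'.ncard ≤ n → (∀ u ∈ C, (u = u' ↔ uw = u') → u ∈ C') →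
            ∃ K, Done H K ∧ ∀ u b x', D.R u b → 0 ≤ x' + 1 → x' ≤ 0 + 1 → x' ≤ m →
            (0 < m → u ∈ C) → (0 < 0 → b ∈ Set.univ) →
            del D m u' D.bs 1 u b x' = del D m u' D.bs 1 uw bw xw → M.pt u b x' ∈ K := by
          intro C' hC' hin
          obtain h0 | h0 : xw = 0 ∨ xw = 1 := by omega
          · refine ⟨_, (ih C' hC').1, ?_⟩
            intro u b x' g1 g2 g3 g4 g5 g6 he
            obtain ⟨e1, e2, e3⟩ := Z_info hm3 (by omega) g1 (by omega) h1 he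
            exact ⟨u, hin u (g5 (by omega)) e2, b, trivial, g1, by rw [e1, h0]⟩
          · by_cases hb : bw = D.bs
            · refine ⟨_, hbs1 C' hC', ?_⟩
              intro u b x' g1 g2 g3 g4 g5 g6 he
              obtain ⟨e1, e2, e3⟩ := Z_info hm3 (by omega) g1 (by omega) h1 he
              exact ⟨u, hin u (g5 (by omega)) e2, b, (e3 (by omega)).2 hb, g1, by rw [e1, h0]⟩
            · refine ⟨_, hfull C' hC', ?_⟩
              intro u b x' g1 g2 g3 g4 g5 g6 he
              obtain ⟨e1, e2, e3⟩ := Z_info hm3 (by omega) g1 (by omega) h1 he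
              exact ⟨u, hin u (g5 (by omega)) e2, b, ⟨trivial, fun h => hb ((e3 (by omega)).1 h)⟩,
                g1, by rw [e1, h0]⟩
        by_cases hu : uw = u'
        · exact fin {u'} s1 (fun u _ h => h.2 hu)
        · exact fin _ s2 (fun u hu2 h => ⟨hu2, fun h' => hu (h.1 h')⟩)
    refine ⟨hZ, ?_⟩
    intro k S hS
    refine M.cd_done hZ ?_ hS
    intro hns
    obtain ⟨u', hu', _⟩ := Set.not_subsingleton_iff.1 hns
    obtain ⟨s1, s2⟩ := small u' hu' hns
    refine ⟨u', hu', ?_⟩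
    intro S hS x hx1 hxm
    exact ⟨(ih _ s1).2 0 S (CD.zero _ _ hS) x hx1 hxm (by omega),
      (ih _ s2).2 0 S (CD.zero _ _ hS) x hx1 hxm (by omega)⟩

theorem SubModel.win [Finite U] [Finite B] (M : SubModel D H m) (hm3 : 3 ≤ m)
    (hB : CD D (m - 1) (Set.univ \ {D.bs}) ∨ (4 ≤ m ∧ TD D (m - 2) (Set.univ \ {D.bs}))) :
    Localizable H 1 := by
  have hm := M.hm
  obtain ⟨hZ, hcd⟩ := M.main_done hm3 hB _ Set.univ le_rfl
  have hQ : ∀ (n : ℕ) (S : Set B), S.ncard ≤ n → ∀ x, 1 ≤ x → x ≤ m →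
      Done H (M.Xs Set.univ S x) := by
    intro n
    induction n with
    | zero =>
      intro S hS x _ _ h
      refine absurd ?_ h
      have hC0 : S = ∅ := by
        rw [← Set.ncard_eq_zero]; omega
      rintro p ⟨u, hu, b, hb, _⟩
      rw [hC0] at hb
      exact absurd hb (by simp)
    | succ n ih =>
      intro S hS x hx1 hxm
      by_cases hns : S.Subsingleton
      · by_cases hx : x = m
        · subst hx
          exact M.Xs_top hns
        · exact hcd 0 S (CD.zero _ _ hns) x hx1 (by omega) (by omega)
      · obtain ⟨b', hb', _⟩ := Set.not_subsingleton_iff.1 hns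
        have h1 := Set.ncard_sdiff_singleton_add_one hb'
        have h2 : 1 < S.ncard := by
          rw [Set.one_lt_ncard_iff_nontrivial]
          exact Set.not_subsingleton_iff.1 hns
        refine M.done_of_probe hxm D.a0 b' m (D.hA _ D.ha0 _) le_rfl ?_
        intro uw bw xw h1 h2 h3 h4 h5 h6
        rcases Nat.eq_zero_or_pos xw with h0 | h0
        · refine ⟨_, hZ, ?_⟩
          intro u b x' g1 g2 g3 g4 g5 g6 he
          obtain ⟨e1, e3⟩ := B_info hm g4 g1 h4 h1 he
          exact ⟨u, trivial, b, trivial, g1, by rw [e1, h0]⟩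
        · by_cases hr : bw = b'
          · refine ⟨_, ih {b'} (by rw [Set.ncard_singleton]; omega) xw h0 h4, ?_⟩
            intro u b x' g1 g2 g3 g4 g5 g6 he
            obtain ⟨e1, e3⟩ := B_info hm g4 g1 h4 h1 he
            exact ⟨u, trivial, b, (e3 (by omega)).2 hr, g1, by rw [e1]⟩
          · refine ⟨_, ih (S \ {b'}) (by omega) xw h0 h4, ?_⟩
            intro u b x' g1 g2 g3 g4 g5 g6 he
            obtain ⟨e1, e3⟩ := B_info hm g4 g1 h4 h1 he
            exact ⟨u, trivial, b, ⟨g6 hx1, fun h => hr ((e3 (by omega)).1 h)⟩, g1, by rw [e1]⟩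
  apply Win.localizable
  refine Win.step _ (fun _ => M.pt D.a0 D.bs 0) ?_
  intro w _
  obtain ⟨uw, bw, xw, h1, h4, rfl⟩ := M.surj w
  have fin : Done H (M.Xs Set.univ Set.univ xw) := by
    rcases Nat.eq_zero_or_pos xw with h0 | h0
    · subst h0; exact hZ
    · exact hQ _ _ le_rfl xw h0 h4
  refine fin.mono ?_
  rintro v ⟨_, he⟩
  obtain ⟨u, b, x', g1, g4, rfl⟩ := M.surj v
  have he := he 0
  rw [M.dist_eq (D.hbs _) (by omega) g1 g4, M.dist_eq (D.hbs _) (by omega) h1 h4] at he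
  obtain ⟨e1, _⟩ := U_info hm g4 g1 h4 h1 he
  exact ⟨u, trivial, b, trivial, g1, by rw [e1]⟩

end cop2

section rob
variable {U B P : Type} {D : Bip U B} {H : SimpleGraph P} {m : ℕ}

theorem del_const_B {u' : U} {b' : B} {y : ℕ} {a : U} (ha : a ∈ D.A) {b1 b2 : B} {x : ℕ}
    (h1 : b1 ≠ b') (h2 : b2 ≠ b') (h : D.R u' b1 ↔ D.R u' b2) :
    del D m u' b' y a b1 x = del D m u' b' y a b2 x := by
  have := D.hA a ha
  by_cases hr : D.R u' b2 <;> simp [del, *]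

theorem del_const_U {u' : U} {b' : B} {y : ℕ} {a1 a2 : U} (ha1 : a1 ∈ D.A) (ha2 : a2 ∈ D.A)
    {b : B} {x : ℕ} (h1 : a1 ≠ u') (h2 : a2 ≠ u') :
    del D m u' b' y a1 b x = del D m u' b' y a2 b x := by
  have := D.hA _ ha1
  have := D.hA _ ha2
  simp [del, *]

/-- the robber family -/
def SubModel.RF (M : SubModel D H m) (S : Set P) : Prop :=
  (∃ x < m, ∃ b : B, ∃ T : Set U, T ⊆ D.A ∧ x + 2 ≤ T.ncard ∧ S = (fun a => M.pt a b x) '' T) ∨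
  (∃ x ≤ m, 1 ≤ x ∧ ∃ a ∈ D.A, ∃ T : Set B, 2 ^ (m - x + 1) ≤ T.ncard ∧
    S = (fun b => M.pt a b x) '' T)

theorem SubModel.robber [Finite U] [Finite B] [Finite P] (M : SubModel D H m)
    (hB : 2 ^ m + 1 ≤ Nat.card B) (hA : m + 2 ≤ D.A.ncard) : ¬ Localizable H 1 := by
  have hm := M.hm
  have rm : ∀ (α : Type) [Finite α] (T : Set α) (a : α), T.ncard ≤ (T \ {a}).ncard + 1 := by
    intro α _ T a
    have := Set.ncard_le_ncard_sdiff_add_ncard T {a}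
    rwa [Set.ncard_singleton] at this
  refine not_localizable_of_family M.RF ?_ ?_ ?_
  · rintro S (⟨x, hx, b, T, hT, hc, rfl⟩ | ⟨x, hx, hx1, a, ha, T, hc, rfl⟩)
    · have : 1 < T.ncard := by omega
      rw [Set.one_lt_ncard_iff_nontrivial] at this
      refine this.image_of_injOn ?_
      intro a ha a' ha' he
      exact (M.inj (D.hA _ (hT ha) _) (D.hA _ (hT ha') _) hx.le hx.le he).2.1 hx
    · have : 1 < T.ncard := by
        have : 2 ^ (m - x + 1) = 2 ^ (m - x) * 2 := pow_succ _ _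
        have : 0 < 2 ^ (m - x) := by positivity
        omega
      rw [Set.one_lt_ncard_iff_nontrivial] at this
      refine this.image_of_injOn ?_
      intro b hb b' hb' he
      exact (M.inj (D.hA _ ha _) (D.hA _ ha _) hx hx he).2.2 hx1
  · intro p
    obtain ⟨u', b', y, hR', hy, hp⟩ := M.surj (p 0)
    refine ⟨_, Or.inl ⟨0, by omega, D.bs, D.A \ {u'}, fun a ha => ha.1, ?_, rfl⟩, ?_⟩
    · have := rm U D.A u'
      omega
    · intro i
      rw [show i = 0 from Subsingleton.elim _ _, hp]
      rintro _ ⟨a, ha, rfl⟩ _ ⟨a', ha', rfl⟩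
      rw [M.dist_eq hR' hy (D.hA _ ha.1 _) (by omega), M.dist_eq hR' hy (D.hA _ ha'.1 _) (by omega)]
      exact del_const_U ha.1 ha'.1 (by simpa using ha.2) (by simpa using ha'.2)
  · intro S hS p
    obtain ⟨u', b', y, hR', hy, hp⟩ := M.surj (p 0)
    have fU : ∀ (T : Set U) (b : B) (x : ℕ), x < m → T ⊆ D.A → x + 2 ≤ (T \ {u'}).ncard →
        (fun a => M.pt a b x) '' (T \ {u'}) ⊆ nbhd H S → ∃ S', M.RF S' ∧ S' ⊆ nbhd H S ∧
          ∀ i, ∀ v ∈ S', ∀ w ∈ S', H.dist (p i) v = H.dist (p i) w := by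
      intro T b x hx hT hc hsub
      refine ⟨_, Or.inl ⟨x, hx, b, T \ {u'}, fun a ha => hT ha.1, hc, rfl⟩, hsub, ?_⟩
      intro i
      rw [show i = 0 from Subsingleton.elim _ _, hp]
      rintro _ ⟨a, ha, rfl⟩ _ ⟨a', ha', rfl⟩
      rw [M.dist_eq hR' hy (D.hA _ (hT ha.1) _) (by omega),
        M.dist_eq hR' hy (D.hA _ (hT ha'.1) _) (by omega)]
      exact del_const_U (hT ha.1) (hT ha'.1) (by simpa using ha.2) (by simpa using ha'.2)
    have fB : ∀ (T : Set B) (a : U) (x : ℕ), x ≤ m → 1 ≤ x → a ∈ D.A → 2 ^ (m - x + 1) ≤ T.ncard →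
        (fun b => M.pt a b x) '' T ⊆ nbhd H S → (∀ b ∈ T, b ≠ b') →
        (∀ b1 ∈ T, ∀ b2 ∈ T, (D.R u' b1 ↔ D.R u' b2)) → ∃ S', M.RF S' ∧ S' ⊆ nbhd H S ∧
          ∀ i, ∀ v ∈ S', ∀ w ∈ S', H.dist (p i) v = H.dist (p i) w := by
      intro T a x hx hx1 ha hc hsub hne hr
      refine ⟨_, Or.inr ⟨x, hx, hx1, a, ha, T, hc, rfl⟩, hsub, ?_⟩
      intro i
      rw [show i = 0 from Subsingleton.elim _ _, hp]
      rintro _ ⟨b, hb, rfl⟩ _ ⟨b2, hb2, rfl⟩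
      rw [M.dist_eq hR' hy (D.hA _ ha _) (by omega), M.dist_eq hR' hy (D.hA _ ha _) (by omega)]
      exact del_const_B ha (hne _ hb) (hne _ hb2) (hr _ hb _ hb2)
    rcases hS with ⟨x, hx, b, T, hT, hc, rfl⟩ | ⟨x, hx, hx1, a, ha, T, hc, rfl⟩
    · rcases Nat.eq_zero_or_pos x with h0 | h0
      · subst h0
        by_cases hu : u' ∈ T
        · have : 1 < T.ncard := by omega
          rw [Set.one_lt_ncard_iff_nontrivial] at this
          obtain ⟨a2, ha2, hne⟩ := this.exists_ne u'
          refine fB (Set.univ \ {b'}) a2 1 hm le_rfl (hT ha2) ?_ ?_ ?_ ?_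
          · have := rm B Set.univ b'
            rw [Set.ncard_univ] at this
            rw [show m - 1 + 1 = m by omega]
            omega
          · rintro _ ⟨b2, _, rfl⟩
            refine ⟨_, ⟨a2, ha2, rfl⟩, Or.inr ?_⟩
            have := M.pt_adj (x := 0) (D.hA _ (hT ha2) b2) (by omega)
            show H.Adj (M.pt a2 b 0) (M.pt a2 b2 1)
            rwa [M.zero (D.hA _ (hT ha2) b) (D.hA _ (hT ha2) b2)]
          · intro b hb
            simpa using hb.2
          · intro b1 _ b2 _
            exact ⟨fun _ => D.hA _ (hT hu) _, fun _ => D.hA _ (hT hu) _⟩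
        · refine fU T b 0 (by omega) hT ?_ ?_
          · rw [Set.sdiff_singleton_eq_self hu]; exact hc
          · rintro _ ⟨a, ha, rfl⟩
            exact ⟨_, ⟨a, ha.1, rfl⟩, Or.inl rfl⟩
      · refine fU T b (x - 1) (by omega) hT ?_ ?_
        · have := rm U T u'
          omega
        · rintro _ ⟨a, ha, rfl⟩
          refine ⟨_, ⟨a, ha.1, rfl⟩, Or.inr ?_⟩
          have := M.pt_adj (x := x - 1) (D.hA _ (hT ha.1) b) (by omega)
          rw [show x - 1 + 1 = x by omega] at this
          exact this.symm
    · by_cases hxm : x = m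
      · subst hxm
        have hT : T.Nonempty := by
          rw [← Set.ncard_pos]
          have : 0 < 2 ^ (x - x + 1) := by positivity
          omega
        obtain ⟨b, hb⟩ := hT
        refine fU D.A b (x - 1) (by omega) le_rfl ?_ ?_
        · have := rm U D.A u'
          omega
        · rintro _ ⟨a2, ha2, rfl⟩
          refine ⟨_, ⟨b, hb, rfl⟩, Or.inr ?_⟩
          have := M.pt_adj (x := x - 1) (D.hA _ ha2.1 b) (by omega)
          rw [show x - 1 + 1 = x by omega] at this
          show H.Adj (M.pt a b x) _
          rw [M.top (D.hA _ ha _) (D.hA _ ha2.1 _)]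
          exact this.symm
      · have hsum := Set.ncard_inter_add_ncard_sdiff_eq_ncard (T \ {b'}) {b | D.R u' b}
        have := rm B T b'
        have e : 2 ^ (m - x + 1) = 2 ^ (m - (x + 1) + 1) * 2 := by
          rw [← pow_succ]; congr 1; omega
        have : 0 < 2 ^ (m - (x + 1) + 1) := by positivity
        have hsub : ∀ T' ⊆ T, (fun b => M.pt a b (x + 1)) '' T' ⊆
            nbhd H ((fun b => M.pt a b x) '' T) := by
          rintro T' hT' _ ⟨b, hb, rfl⟩
          exact ⟨_, ⟨b, hT' hb, rfl⟩, Or.inr (M.pt_adj (D.hA _ ha _) (by omega))⟩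
        by_cases hbig : 2 ^ (m - (x + 1) + 1) ≤ ((T \ {b'}) ∩ {b | D.R u' b}).ncard
        · refine fB _ a (x + 1) (by omega) (by omega) ha hbig (hsub _ fun b hb => hb.1.1) ?_ ?_
          · intro b hb
            simpa using hb.1.2
          · intro b1 h1 b2 h2
            exact ⟨fun _ => h2.2, fun _ => h1.2⟩
        · refine fB ((T \ {b'}) \ {b | D.R u' b}) a (x + 1) (by omega) (by omega) ha (by omega)
            (hsub _ fun b hb => hb.1.1) ?_ ?_
          · intro b hb
            simpa using hb.1.2
          · intro b1 h1 b2 h2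
            exact ⟨fun h => absurd h h1.2, fun h => absurd h h2.2⟩

end rob

section zeta
variable {U B P : Type} {D : Bip U B} {H : SimpleGraph P}

/-- what a probe says about `b` -/
def Bip.chi (D : Bip U B) : U ⊕ B → B → Prop
  | Sum.inl u, b => D.R u b
  | Sum.inr b', b => b = b'

/-- the probes in `Q` distinguish all the vertices of `B` -/
def Bip.Resolves (D : Bip U B) (Q : Finset (U ⊕ B)) : Prop :=
  ∀ b1 b2, b1 ≠ b2 → ∃ q ∈ Q, ¬ (D.chi q b1 ↔ D.chi q b2)

/-- branch vertices -/
def SubModel.br (M : SubModel D H 1) : U ⊕ B → P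
  | Sum.inl u => M.pt u D.bs 0
  | Sum.inr b => M.pt D.a0 b 1

open Classical in
theorem SubModel.br_dist (M : SubModel D H 1) (q : U ⊕ B) :
    (∀ u, H.dist (M.br q) (M.br (Sum.inl u)) = match q with
      | Sum.inl u' => if u = u' then 0 else 2
      | Sum.inr b' => if D.R u b' then 1 else 3) ∧
    (∀ b, H.dist (M.br q) (M.br (Sum.inr b)) = match q with
      | Sum.inl u' => if D.R u' b then 1 else 3
      | Sum.inr b' => if b = b' then 0 else 2) := by
  have h1 := D.hbs
  have h2 := D.hA _ D.ha0
  rcases q with u' | b'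
  · refine ⟨fun u => ?_, fun b => ?_⟩
    · show H.dist (M.pt _ _ _) (M.pt _ _ _) = _
      rw [M.dist_eq (h1 _) (by omega) (h1 _) (by omega), del_U _ _ _ _ (by omega) (h1 _)]
      simp
    · show H.dist (M.pt _ _ _) (M.pt _ _ _) = _
      rw [M.dist_eq (h1 _) (by omega) (h2 _) (by omega), del_U _ _ _ _ (by omega) (h2 _)]
      by_cases hu : D.a0 = u'
      · subst hu; simp [h2]
      · simp [hu]
  · refine ⟨fun u => ?_, fun b => ?_⟩
    · show H.dist (M.pt _ _ _) (M.pt _ _ _) = _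
      rw [M.dist_eq (h2 _) (by omega) (h1 _) (by omega), del_B _ _ _ _ (by omega) (h1 _)]
      by_cases hb : D.bs = b'
      · subst hb; simp [h1]
      · simp [hb]
    · show H.dist (M.pt _ _ _) (M.pt _ _ _) = _
      rw [M.dist_eq (h2 _) (by omega) (h2 _) (by omega), del_B _ _ _ _ (by omega) (h2 _)]
      simp [h2]

theorem SubModel.br_surj (M : SubModel D H 1) (p : P) : ∃ q, p = M.br q := by
  obtain ⟨u, b, x, hR, hx, rfl⟩ := M.surj p
  obtain rfl | rfl : x = 0 ∨ x = 1 := by omega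
  · exact ⟨Sum.inl u, M.zero hR (D.hbs u)⟩
  · exact ⟨Sum.inr b, M.top hR (D.hA _ D.ha0 b)⟩

theorem SubModel.br_inj (M : SubModel D H 1) {q q' : U ⊕ B} (h : M.br q = M.br q') : q = q' := by
  rcases q with u | b <;> rcases q' with u' | b'
  · have := (M.inj (D.hbs _) (D.hbs _) (by omega) (by omega) h).2.1 (by omega)
    rw [this]
  · have := (M.inj (D.hbs _) (D.hA _ D.ha0 _) (by omega) (by omega) h).1
    omega
  · have := (M.inj (D.hA _ D.ha0 _) (D.hbs _) (by omega) (by omega) h).1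
    omega
  · have := (M.inj (D.hA _ D.ha0 _) (D.hA _ D.ha0 _) (by omega) (by omega) h).2.2 (by omega)
    rw [this]

theorem SubModel.br_adj (M : SubModel D H 1) {a : U} (ha : a ∈ D.A) (b : B) :
    H.Adj (M.br (Sum.inl a)) (M.br (Sum.inr b)) := by
  have := M.pt_adj (x := 0) (D.hA _ ha b) (by omega)
  show H.Adj (M.pt _ _ _) (M.pt _ _ _)
  rw [M.zero (D.hbs a) (D.hA _ ha b), M.top (D.hA _ D.ha0 b) (D.hA _ ha b)]
  exact this

theorem SubModel.br_B (M : SubModel D H 1) (q : U ⊕ B) (b1 b2 : B) :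
    H.dist (M.br q) (M.br (Sum.inr b1)) = H.dist (M.br q) (M.br (Sum.inr b2)) ↔
      (D.chi q b1 ↔ D.chi q b2) := by
  rw [(M.br_dist q).2, (M.br_dist q).2]
  rcases q with u | b
  · by_cases h1 : D.R u b1 <;> by_cases h2 : D.R u b2 <;> simp [Bip.chi, *]
  · by_cases h1 : b1 = b <;> by_cases h2 : b2 = b <;> simp [Bip.chi, *]

theorem SubModel.zeta_lower [Finite U] [Finite P] (M : SubModel D H 1) {r k : ℕ} (hk : k ≤ r)
    (hlow : ∀ Q, D.Resolves Q → r ≤ Q.card) (hA : r + 2 ≤ D.A.ncard) : ¬ Localizable H k := by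
  classical
  have free : ∀ q : Fin k → U ⊕ B, ∃ a1 ∈ D.A, ∃ a2 ∈ D.A, a1 ≠ a2 ∧
      ∀ i, q i ≠ Sum.inl a1 ∧ q i ≠ Sum.inl a2 := by
    intro q
    set T : Set U := {u | ∃ i, q i = Sum.inl u} with hT
    have hTc : T.ncard ≤ k := by
      have h1 : (Sum.inl '' T : Set (U ⊕ B)) ⊆ ((Finset.univ.image q : Finset (U ⊕ B)) : Set _) := by
        rintro _ ⟨u, ⟨i, hi⟩, rfl⟩
        simp only [Finset.coe_image, Set.mem_image]
        exact ⟨i, by simp, hi⟩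
      have h2 := Set.ncard_le_ncard h1 (Finset.finite_toSet _)
      rw [Set.ncard_image_of_injective _ Sum.inl_injective, Set.ncard_coe_finset] at h2
      refine h2.trans (Finset.card_image_le.trans (by simp))
    have h3 := Set.ncard_le_ncard_sdiff_add_ncard D.A T
    have h4 : 1 < (D.A \ T).ncard := by omega
    rw [Set.one_lt_ncard_iff_nontrivial] at h4
    obtain ⟨a1, h1, a2, h2, hne⟩ := h4
    exact ⟨a1, h1.1, a2, h2.1, hne, fun i => ⟨fun h => h1.2 ⟨i, h⟩, fun h => h2.2 ⟨i, h⟩⟩⟩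
  have cA : ∀ a1 ∈ D.A, ∀ a2 ∈ D.A, ∀ q : U ⊕ B, q ≠ Sum.inl a1 → q ≠ Sum.inl a2 →
      ∀ v ∈ ({M.br (Sum.inl a1), M.br (Sum.inl a2)} : Set P),
      ∀ w ∈ ({M.br (Sum.inl a1), M.br (Sum.inl a2)} : Set P),
        H.dist (M.br q) v = H.dist (M.br q) w := by
    intro a1 h1 a2 h2 q hq1 hq2
    have e : H.dist (M.br q) (M.br (Sum.inl a1)) = H.dist (M.br q) (M.br (Sum.inl a2)) := by
      rw [(M.br_dist q).1, (M.br_dist q).1]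
      rcases q with u | b
      · have : a1 ≠ u := by rintro rfl; exact hq1 rfl
        have : a2 ≠ u := by rintro rfl; exact hq2 rfl
        simp [*]
      · simp [D.hA _ h1, D.hA _ h2]
    rintro v (rfl | rfl) w (rfl | rfl)
    · rfl
    · exact e
    · exact e.symm
    · rfl
  refine not_localizable_of_family (fun S =>
    (∃ a1 ∈ D.A, ∃ a2 ∈ D.A, a1 ≠ a2 ∧ S = {M.br (Sum.inl a1), M.br (Sum.inl a2)}) ∨
    (∃ b1 b2, b1 ≠ b2 ∧ S = {M.br (Sum.inr b1), M.br (Sum.inr b2)})) ?_ ?_ ?_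
  · rintro S (⟨a1, h1, a2, h2, hne, rfl⟩ | ⟨b1, b2, hne, rfl⟩)
    · exact Set.nontrivial_pair fun h => hne (Sum.inl_injective (M.br_inj h))
    · exact Set.nontrivial_pair fun h => hne (Sum.inr_injective (M.br_inj h))
  · intro p
    choose q hq using fun i => M.br_surj (p i)
    obtain ⟨a1, h1, a2, h2, hne, hf⟩ := free q
    refine ⟨_, Or.inl ⟨a1, h1, a2, h2, hne, rfl⟩, fun i => ?_⟩
    rw [hq i]
    exact cA a1 h1 a2 h2 (q i) (hf i).1 (hf i).2
  · intro S hS p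
    choose q hq using fun i => M.br_surj (p i)
    rcases hS with ⟨a1, h1, a2, h2, hne, rfl⟩ | ⟨b1, b2, hne, rfl⟩
    · by_cases hf : ∀ i, q i ≠ Sum.inl a1 ∧ q i ≠ Sum.inl a2
      · refine ⟨_, Or.inl ⟨a1, h1, a2, h2, hne, rfl⟩, fun v hv => ⟨v, hv, Or.inl rfl⟩, fun i => ?_⟩
        rw [hq i]
        exact cA a1 h1 a2 h2 (q i) (hf i).1 (hf i).2
      · obtain ⟨i0, a, ha, hi0⟩ : ∃ i0 a, a ∈ D.A ∧ q i0 = Sum.inl a := by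
          by_contra hcon
          push Not at hcon
          exact hf fun i => ⟨hcon i a1 h1, hcon i a2 h2⟩
        set Q : Finset (U ⊕ B) := (Finset.univ.erase i0).image q with hQ
        have hQc : Q.card < k := by
          refine lt_of_le_of_lt Finset.card_image_le ?_
          rw [Finset.card_erase_of_mem (Finset.mem_univ _), Finset.card_univ, Fintype.card_fin]
          have := i0.2
          omega
        have hnr : ¬ D.Resolves Q := fun h => by
          have := hlow Q h
          omega
        unfold Bip.Resolves at hnr
        push Not at hnr
        obtain ⟨b1, b2, hb, hu⟩ := hnr
        refine ⟨_, Or.inr ⟨b1, b2, hb, rfl⟩, ?_, ?_⟩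
        · rintro v (rfl | rfl)
          · exact ⟨_, Or.inl rfl, Or.inr (M.br_adj h1 _)⟩
          · exact ⟨_, Or.inl rfl, Or.inr (M.br_adj h1 _)⟩
        · intro i
          rw [hq i]
          have e : H.dist (M.br (q i)) (M.br (Sum.inr b1)) =
              H.dist (M.br (q i)) (M.br (Sum.inr b2)) := by
            rw [M.br_B]
            by_cases hi : i = i0
            · rw [hi, hi0]
              exact ⟨fun _ => D.hA _ ha _, fun _ => D.hA _ ha _⟩
            · have := hu (q i) (Finset.mem_image_of_mem _ (by simp [hi]))
              tauto
          rintro v (rfl | rfl) w (rfl | rfl)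
          · rfl
          · exact e
          · exact e.symm
          · rfl
    · obtain ⟨a1, h1, a2, h2, hne, hf⟩ := free q
      refine ⟨_, Or.inl ⟨a1, h1, a2, h2, hne, rfl⟩, ?_, fun i => ?_⟩
      · rintro v (rfl | rfl)
        · exact ⟨_, Or.inl rfl, Or.inr (M.br_adj h1 _).symm⟩
        · exact ⟨_, Or.inl rfl, Or.inr (M.br_adj h2 _).symm⟩
      · rw [hq i]
        exact cA a1 h1 a2 h2 (q i) (hf i).1 (hf i).2

theorem SubModel.zeta_upper [Finite U] (M : SubModel D H 1) {r : ℕ} {Q : Finset (U ⊕ B)}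
    (hQ : D.Resolves Q) (hr : Q.card = r) : Localizable H (r + 1) := by
  classical
  subst hr
  have key : ∀ (n : ℕ) (C : Set U), C.ncard ≤ n → Win H (Q.card + 1)
      {p | (∃ u ∈ C, p = M.br (Sum.inl u)) ∨ ∃ b, p = M.br (Sum.inr b)} := by
    intro n
    induction n with
    | zero =>
      intro C hC
      have hC0 : C = ∅ := by
        rw [← Set.ncard_eq_zero]; omega
      subst hC0
      refine Win.step _ (Fin.cons (M.br (Sum.inl D.a0))
        (fun i => M.br (Q.equivFin.symm i).1)) ?_
      intro w hw hns
      refine absurd ?_ hns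
      rintro v1 ⟨⟨u, hu, _⟩ | ⟨b1, rfl⟩, he1⟩ v2 ⟨⟨u, hu, _⟩ | ⟨b2, rfl⟩, he2⟩
      · exact absurd hu (by simp)
      · exact absurd hu (by simp)
      · exact absurd hu (by simp)
      · by_contra hne
        obtain ⟨q, hq, hne⟩ := hQ b1 b2 (by rintro rfl; exact hne rfl)
        apply hne
        rw [← M.br_B]
        have e1 := he1 (Fin.succ (Q.equivFin ⟨q, hq⟩))
        have e2 := he2 (Fin.succ (Q.equivFin ⟨q, hq⟩))
        simp only [Fin.cons_succ, Equiv.symm_apply_apply] at e1 e2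
        rw [e1, e2]
    | succ n ih =>
      intro C hC
      rcases C.eq_empty_or_nonempty with rfl | ⟨u', hu'⟩
      · exact ih ∅ (by simp)
      refine Win.step _ (Fin.cons (M.br (Sum.inl u'))
        (fun i => M.br (Q.equivFin.symm i).1)) ?_
      intro w hw hns
      rcases hw with ⟨uw, huw, rfl⟩ | ⟨bw, rfl⟩
      · have sub : ∀ v, v ∈ {v | v ∈ {p | (∃ u ∈ C, p = M.br (Sum.inl u)) ∨
            ∃ b, p = M.br (Sum.inr b)} ∧ ∀ i, H.dist ((Fin.cons (M.br (Sum.inl u'))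
              (fun i => M.br (Q.equivFin.symm i).1) : Fin (Q.card + 1) → P) i) v =
              H.dist ((Fin.cons (M.br (Sum.inl u'))
              (fun i => M.br (Q.equivFin.symm i).1) : Fin (Q.card + 1) → P) i)
              (M.br (Sum.inl uw))} → ∃ u ∈ C, v = M.br (Sum.inl u) ∧ (u = u' ↔ uw = u') := by
          rintro v ⟨⟨u, hu, rfl⟩ | ⟨b, rfl⟩, he⟩
          · refine ⟨u, hu, rfl, ?_⟩
            have := he 0
            simp only [Fin.cons_zero] at this
            rw [(M.br_dist _).1, (M.br_dist _).1] at this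
            by_cases h1 : u = u' <;> by_cases h2 : uw = u' <;> simp [h1, h2] at this ⊢
          · have := he 0
            simp only [Fin.cons_zero] at this
            rw [(M.br_dist _).1, (M.br_dist _).2] at this
            by_cases h1 : D.R u' b <;> by_cases h2 : uw = u' <;> simp [h1, h2] at this
        by_cases h : uw = u'
        · refine absurd ?_ hns
          intro v1 hv1 v2 hv2
          obtain ⟨u1, _, rfl, e1⟩ := sub v1 hv1
          obtain ⟨u2, _, rfl, e2⟩ := sub v2 hv2
          rw [e1.2 h, e2.2 h]
        · refine (ih (C \ {u'}) ?_).mono ?_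
          · have := Set.ncard_sdiff_singleton_add_one hu'
            omega
          · rintro x ⟨v, hv, hx⟩
            obtain ⟨u1, hu1, rfl, e1⟩ := sub v hv
            rcases hx with rfl | hadj
            · exact Or.inl ⟨u1, ⟨hu1, fun h' => h (e1.1 h')⟩, rfl⟩
            · obtain ⟨q, rfl⟩ := M.br_surj x
              rcases q with u2 | b2
              · exfalso
                have h1 := SimpleGraph.dist_eq_one_iff_adj.2 hadj
                rw [(M.br_dist _).1] at h1
                dsimp only at h1
                split_ifs at h1
                omega
              · exact Or.inr ⟨b2, rfl⟩
      · refine absurd ?_ hns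
        have sub : ∀ v, v ∈ {v | v ∈ {p | (∃ u ∈ C, p = M.br (Sum.inl u)) ∨
            ∃ b, p = M.br (Sum.inr b)} ∧ ∀ i, H.dist ((Fin.cons (M.br (Sum.inl u'))
              (fun i => M.br (Q.equivFin.symm i).1) : Fin (Q.card + 1) → P) i) v =
              H.dist ((Fin.cons (M.br (Sum.inl u'))
              (fun i => M.br (Q.equivFin.symm i).1) : Fin (Q.card + 1) → P) i)
              (M.br (Sum.inr bw))} → v = M.br (Sum.inr bw) := by
          rintro v ⟨⟨u, hu, rfl⟩ | ⟨b, rfl⟩, he⟩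
          · have := he 0
            simp only [Fin.cons_zero] at this
            rw [(M.br_dist _).1, (M.br_dist _).2] at this
            by_cases h1 : D.R u' bw <;> by_cases h2 : u = u' <;> simp [h1, h2] at this
          · by_contra hne
            obtain ⟨q, hq, hne⟩ := hQ b bw (by rintro rfl; exact hne rfl)
            apply hne
            rw [← M.br_B]
            have e1 := he (Fin.succ (Q.equivFin ⟨q, hq⟩))
            simp only [Fin.cons_succ, Equiv.symm_apply_apply] at e1
            exact e1
        intro v1 hv1 v2 hv2
        rw [sub v1 hv1, sub v2 hv2]
  refine Win.localizable ((key _ Set.univ le_rfl).mono ?_)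
  intro p _
  obtain ⟨q, rfl⟩ := M.br_surj p
  rcases q with u | b
  · exact Or.inl ⟨u, trivial, rfl⟩
  · exact Or.inr ⟨b, rfl⟩

theorem SubModel.zeta [Finite U] [Finite P] (M : SubModel D H 1) {r : ℕ}
    (hlow : ∀ Q, D.Resolves Q → r ≤ Q.card) (hup : ∃ Q, D.Resolves Q ∧ Q.card = r)
    (hA : r + 2 ≤ D.A.ncard) : locNum H = r + 1 := by
  obtain ⟨Q, hQ, hc⟩ := hup
  have h1 : Localizable H (r + 1) := M.zeta_upper hQ hc
  unfold locNum
  refine le_antisymm (Nat.sInf_le h1) ?_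
  by_contra hlt
  have h2 : Localizable H (sInf {k | Localizable H k}) := Nat.sInf_mem (s := {k | Localizable H k}) ⟨_, h1⟩
  exact M.zeta_lower (by omega) hlow hA h2

end zeta

section sub
variable {V : Type} [LinearOrder V] (G : SimpleGraph V) (m : ℕ)

theorem tv_zero (a c : V) (h : G.Adj a c) : threadVert G m a c h 0 = Sum.inl a := by
  simp [threadVert]

theorem tv_top {m : ℕ} (hm : 1 ≤ m) (a c : V) (h : G.Adj a c) :
    threadVert G m a c h m = Sum.inl c := by
  have : m ≠ 0 := by omega
  simp [threadVert, this]

theorem tv_mid (a c : V) (h : G.Adj a c) (hlt : a < c) (j : ℕ) (h0 : 0 < j) (hj : j < m) :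
    threadVert G m a c h j = Sum.inr (⟨(a, c), h, hlt⟩, ⟨j - 1, by omega⟩) := by
  have h1 : j ≠ 0 := by omega
  have h2 : ¬ m ≤ j := by omega
  simp [threadVert, h1, h2, hlt]

theorem tv_swap {m : ℕ} (hm : 1 ≤ m) (a c : V) (h : G.Adj a c) (j : ℕ) (hj : j ≤ m) :
    threadVert G m a c h j = threadVert G m c a h.symm (m - j) := by
  rcases Nat.eq_zero_or_pos j with h0 | h0
  · subst h0
    rw [tv_zero, Nat.sub_zero, tv_top _ hm]
  · by_cases hjm : j = m
    · subst hjm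
      rw [Nat.sub_self, tv_zero, tv_top _ hm]
    · have h1 : j ≠ 0 := by omega
      have h2 : ¬ m ≤ j := by omega
      have h3 : ¬ m - j = 0 := by omega
      have h4 : ¬ m ≤ m - j := by omega
      have h5 : m - (m - j) - 1 = j - 1 := by omega
      have hne := h.ne
      rcases lt_or_gt_of_ne hne with hlt | hlt
      · have hn : ¬ c < a := not_lt.2 hlt.le
        simp only [threadVert, h1, h2, h3, h4, h5, hlt, hn, dite_true, dite_false]
      · have hn : ¬ a < c := not_lt.2 hlt.le
        simp only [threadVert, h1, h2, h3, h4, hlt, hn, dite_true, dite_false]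

theorem subdiv_adj {m : ℕ} (hm : 1 ≤ m) (p q : SubVert V G m) : (Subdiv G m).Adj p q ↔
    ∃ a c, ∃ h : G.Adj a c, a < c ∧ ∃ j < m,
      ((p = threadVert G m a c h j ∧ q = threadVert G m a c h (j + 1)) ∨
       (q = threadVert G m a c h j ∧ p = threadVert G m a c h (j + 1))) := by
  have fwd : ∀ p q : SubVert V G m, subPre G m p q → ∃ a c, ∃ h : G.Adj a c, a < c ∧ ∃ j < m,
      ((p = threadVert G m a c h j ∧ q = threadVert G m a c h (j + 1)) ∨
       (q = threadVert G m a c h j ∧ p = threadVert G m a c h (j + 1))) := by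
    rintro (u | ⟨⟨⟨a, c⟩, hac, hlt⟩, i⟩) (v | ⟨⟨⟨a', c'⟩, hac', hlt'⟩, j⟩) h
    · obtain ⟨rfl, h⟩ := h
      rcases lt_or_gt_of_ne h.ne with hlt | hlt
      · exact ⟨u, v, h, hlt, 0, by omega, Or.inl ⟨(tv_zero ..).symm, (tv_top _ le_rfl ..).symm⟩⟩
      · exact ⟨v, u, h.symm, hlt, 0, by omega,
          Or.inr ⟨(tv_zero ..).symm, (tv_top _ le_rfl ..).symm⟩⟩
    · have hj := j.2
      rcases h with ⟨rfl, h⟩ | ⟨rfl, h⟩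
      · refine ⟨u, c', hac', hlt', 0, by omega, Or.inl ⟨(tv_zero ..).symm, ?_⟩⟩
        dsimp only at h
        rw [tv_mid _ _ _ _ _ hlt' _ (by omega) (by omega)]
        congr 2
        ext
        simp [h]
      · dsimp only at h
        refine ⟨a', u, hac', hlt', j + 1, by omega, Or.inr ⟨?_, ?_⟩⟩
        · rw [tv_mid _ _ _ _ _ hlt' _ (by omega) (by omega)]
          congr 2
        · have : (j : ℕ) + 1 + 1 = m := by omega
          rw [this, tv_top _ hm]
    · exact absurd h (by simp [subPre])
    · obtain ⟨h1, h2⟩ := h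
      have hi := i.2
      have hj := j.2
      dsimp only at h1 h2
      injection h1 with h1
      injection h1 with h1 h3
      subst h1 h3
      refine ⟨a, c, hac, hlt, i + 1, by omega, Or.inl ⟨?_, ?_⟩⟩
      · rw [tv_mid _ _ _ _ _ hlt _ (by omega) (by omega)]
        congr 2
      · rw [tv_mid _ _ _ _ _ hlt _ (by omega) (by omega)]
        congr 2
        ext
        simp [h2]
  have bwd : ∀ a c, ∀ h : G.Adj a c, a < c → ∀ j < m,
      (Subdiv G m).Adj (threadVert G m a c h j) (threadVert G m a c h (j + 1)) := by
    intro a c h hlt j hj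
    unfold Subdiv
    rw [SimpleGraph.fromRel_adj]
    rcases Nat.eq_zero_or_pos j with h0 | h0
    · subst h0
      rw [tv_zero]
      by_cases hjm : 0 + 1 = m
      · subst hjm
        rw [tv_top _ le_rfl]
        exact ⟨by simpa using hlt.ne, Or.inl ⟨rfl, h⟩⟩
      · rw [tv_mid _ _ _ _ _ hlt _ (by omega) (by omega)]
        exact ⟨by simp, Or.inl (Or.inl ⟨rfl, rfl⟩)⟩
    · rw [tv_mid _ _ _ _ _ hlt j (by omega) (by omega)]
      by_cases hjm : j + 1 = m
      · subst hjm
        rw [tv_top _ hm]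
        exact ⟨by simp, Or.inr (Or.inr ⟨rfl, by simp; omega⟩)⟩
      · rw [tv_mid _ _ _ _ _ hlt _ (by omega) (by omega)]
        refine ⟨?_, Or.inl ⟨rfl, by simp; omega⟩⟩
        intro he
        simp only [Sum.inr.injEq, Prod.mk.injEq, Fin.mk.injEq] at he
        omega
  constructor
  · intro h
    rcases (SimpleGraph.fromRel_adj _ _ _).1 h with ⟨_, h | h⟩
    · exact fwd p q h
    · obtain ⟨a, c, h, hlt, j, hj, h'⟩ := fwd q p h
      exact ⟨a, c, h, hlt, j, hj, h'.symm⟩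
  · rintro ⟨a, c, h, hlt, j, hj, ⟨rfl, rfl⟩ | ⟨rfl, rfl⟩⟩
    · exact bwd a c h hlt j hj
    · exact (bwd a c h hlt j hj).symm

variable {U B : Type}

/-- the bipartite graph on a type of labels -/
def Bip.gr (D : Bip U B) (e : U ⊕ B ≃ V) : SimpleGraph V where
  Adj v w := ∃ u b, D.R u b ∧ ((v = e (Sum.inl u) ∧ w = e (Sum.inr b)) ∨
    (w = e (Sum.inl u) ∧ v = e (Sum.inr b)))
  symm := ⟨by
    rintro v w ⟨u, b, h, h'⟩
    exact ⟨u, b, h, h'.symm⟩⟩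
  loopless := ⟨by
    rintro v ⟨u, b, _, ⟨h1, h2⟩ | ⟨h1, h2⟩⟩ <;>
    · rw [h1] at h2
      exact absurd (e.injective h2) (by simp)⟩

theorem Bip.gr_adj (D : Bip U B) (e : U ⊕ B ≃ V) {u : U} {b : B} (h : D.R u b) :
    (D.gr e).Adj (e (Sum.inl u)) (e (Sum.inr b)) := ⟨u, b, h, Or.inl ⟨rfl, rfl⟩⟩

/-- the graph itself as a model -/
def Bip.grModel (D : Bip U B) (e : U ⊕ B ≃ V) : SubModel D (D.gr e) 1 where
  hm := le_rfl
  pt u b x := if x = 0 then e (Sum.inl u) else e (Sum.inr b)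
  surj p := by
    obtain ⟨q, rfl⟩ := e.surjective p
    rcases q with u | b
    · exact ⟨u, D.bs, 0, D.hbs u, by omega, by simp⟩
    · exact ⟨D.a0, b, 1, D.hA _ D.ha0 b, by omega, by simp⟩
  adj p q := by
    constructor
    · rintro ⟨u, b, h, h'⟩
      exact ⟨u, b, 0, h, by omega, by simpa using h'⟩
    · rintro ⟨u, b, x, h, hx, h'⟩
      obtain rfl : x = 0 := by omega
      exact ⟨u, b, h, by simpa using h'⟩
  inj := by
    intro u b x u' b' x' _ _ hx hx' h
    obtain rfl | rfl : x = 0 ∨ x = 1 := by omega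
    all_goals
      obtain rfl | rfl : x' = 0 ∨ x' = 1 := by omega
    all_goals
      simpa using h
  zero := by intros; simp
  top := by intros; simp

open Classical in
/-- the subdivision as a model -/
noncomputable def Bip.subModel (D : Bip U B) (e : U ⊕ B ≃ V) (m : ℕ) (hm : 1 ≤ m) :
    SubModel D (Subdiv (D.gr e) m) m where
  hm := hm
  pt u b x := if h : D.R u b then
    threadVert (D.gr e) m (e (Sum.inl u)) (e (Sum.inr b)) (D.gr_adj e h) x else Sum.inl (e (Sum.inl u))
  surj p := by
    rcases p with v | ⟨⟨⟨a, c⟩, hac, hlt⟩, i⟩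
    · obtain ⟨q, rfl⟩ := e.surjective v
      rcases q with u | b
      · refine ⟨u, D.bs, 0, D.hbs u, by omega, ?_⟩
        rw [dif_pos (D.hbs u), tv_zero]
      · refine ⟨D.a0, b, m, D.hA _ D.ha0 b, by omega, ?_⟩
        rw [dif_pos (D.hA _ D.ha0 b), tv_top _ hm]
    · have hi := i.2
      obtain ⟨u, b, hR, ⟨h1, h2⟩ | ⟨h1, h2⟩⟩ := id hac
      · dsimp only at h1 h2 hlt
        subst h1 h2
        refine ⟨u, b, i + 1, hR, by omega, ?_⟩
        rw [dif_pos hR, tv_mid _ _ _ _ _ hlt _ (by omega) (by omega)]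
        congr 2
      · dsimp only at h1 h2 hlt
        subst h1 h2
        refine ⟨u, b, m - (i + 1), hR, by omega, ?_⟩
        rw [dif_pos hR, tv_swap _ hm _ _ _ _ (by omega),
          tv_mid _ _ _ _ _ hlt _ (by omega) (by omega)]
        congr 2
        ext
        show (i : ℕ) = m - (m - (i + 1)) - 1
        omega
  adj p q := by
    rw [subdiv_adj _ hm]
    constructor
    · rintro ⟨a, c, hac, hlt, j, hj, h⟩
      obtain ⟨u, b, hR, ⟨h1, h2⟩ | ⟨h1, h2⟩⟩ := id hac
      · subst h1 h2
        refine ⟨u, b, j, hR, hj, ?_⟩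
        rw [dif_pos hR, dif_pos hR]
        exact h
      · subst h1 h2
        refine ⟨u, b, m - (j + 1), hR, by omega, ?_⟩
        rw [dif_pos hR, dif_pos hR]
        rw [tv_swap _ hm _ _ _ _ (by omega), tv_swap _ hm _ _ _ (m - (j + 1) + 1) (by omega)]
        rw [show m - (m - (j + 1)) = j + 1 by omega, show m - (m - (j + 1) + 1) = j by omega]
        tauto
    · rintro ⟨u, b, x, hR, hx, h⟩
      rw [dif_pos hR, dif_pos hR] at h
      have hadj := D.gr_adj e hR
      rcases lt_or_gt_of_ne hadj.ne with hlt | hlt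
      · exact ⟨_, _, hadj, hlt, x, hx, h⟩
      · refine ⟨_, _, hadj.symm, hlt, m - (x + 1), by omega, ?_⟩
        rw [tv_swap _ hm _ _ _ _ (by omega), tv_swap _ hm _ _ _ (x + 1) (by omega)] at h
        rw [show m - (x + 1) + 1 = m - x by omega]
        tauto
  inj := by
    intro u b x u' b' x' hR hR' hx hx' h
    rw [dif_pos hR, dif_pos hR'] at h
    rcases Nat.eq_zero_or_pos x with h0 | h0
    · subst h0
      rw [tv_zero] at h
      rcases Nat.eq_zero_or_pos x' with h0' | h0'
      · subst h0'
        rw [tv_zero] at h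
        exact ⟨rfl, fun _ => by simpa using h, by omega⟩
      · by_cases hxm' : x' = m
        · subst hxm'
          rw [tv_top _ hm] at h
          simp at h
        · have h1 : ¬ x' = 0 := by omega
          have h2 : ¬ m ≤ x' := by omega
          simp only [threadVert, h1, h2, dite_false] at h
          split_ifs at h
    · by_cases hxm : x = m
      · subst hxm
        rw [tv_top _ hm] at h
        rcases Nat.eq_zero_or_pos x' with h0' | h0'
        · subst h0'
          rw [tv_zero] at h
          simp at h
        · by_cases hxm' : x' = x
          · subst hxm'
            rw [tv_top _ hm] at h
            simp at h
            simp [h]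
          · have h1 : ¬ x' = 0 := by omega
            have h2 : ¬ x ≤ x' := by omega
            simp only [threadVert, h1, h2, dite_false] at h
            split_ifs at h
      · have g1 : ¬ x = 0 := by omega
        have g2 : ¬ m ≤ x := by omega
        rcases Nat.eq_zero_or_pos x' with h0' | h0'
        · subst h0'
          rw [tv_zero] at h
          simp only [threadVert, g1, g2, dite_false] at h
          split_ifs at h
        · by_cases hxm' : x' = m
          · subst hxm'
            rw [tv_top _ hm] at h
            simp only [threadVert, g1, g2, dite_false] at h
            split_ifs at h
          · have h1 : ¬ x' = 0 := by omega
            have h2 : ¬ m ≤ x' := by omega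
            simp only [threadVert, h1, h2, g1, g2, dite_false] at h
            split_ifs at h <;> simp at h
            · exact ⟨by omega, fun _ => h.1.1, fun _ => h.1.2⟩
            · exact ⟨by omega, fun _ => h.1.2, fun _ => h.1.1⟩
  zero := by
    intro u b b' h h'
    rw [dif_pos h, dif_pos h', tv_zero, tv_zero]
  top := by
    intro u u' b h h'
    rw [dif_pos h, dif_pos h', tv_top _ hm, tv_top _ hm]

/-- summary: what has to be checked for the bipartite data -/
theorem Bip.final [Finite U] [Finite B] (D : Bip U B) (m : ℕ) (hm : 3 ≤ m)
    (hB : CD D (m - 1) (Set.univ \ {D.bs}) ∨ (4 ≤ m ∧ TD D (m - 2) (Set.univ \ {D.bs})))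
    (hcB : 2 ^ (m - 1) + 1 ≤ Nat.card B)
    (hlow : ∀ Q, D.Resolves Q → 2 ^ (m - 1) - 1 ≤ Q.card)
    (hup : ∃ Q, D.Resolves Q ∧ Q.card = 2 ^ (m - 1) - 1)
    (hA : 2 ^ (m - 1) + 1 ≤ D.A.ncard) :
    ∃ (n : ℕ) (G : SimpleGraph (Fin n)),
      G.Connected ∧ subdivNum G = m ∧ locNum G = 2 ^ (m - 1) := by
  obtain ⟨n, ⟨e⟩⟩ := Finite.exists_equiv_fin (U ⊕ B)
  have hpos : 0 < 2 ^ (m - 1) := by positivity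
  have hlt : m - 1 < 2 ^ (m - 1) := Nat.lt_two_pow_self
  refine ⟨n, D.gr e, (D.grModel e).connected, ?_, ?_⟩
  · unfold subdivNum
    have hmem : m ∈ {m | 1 ≤ m ∧ Localizable (Subdiv (D.gr e) m) 1} :=
      ⟨by omega, (D.subModel e m (by omega)).win hm hB⟩
    refine le_antisymm (Nat.sInf_le hmem) ?_
    by_contra hlt'
    obtain ⟨h1, h2⟩ := Nat.sInf_mem ⟨m, hmem⟩
    refine (D.subModel e _ h1).robber ?_ ?_ h2
    · refine le_trans ?_ hcB
      have := Nat.pow_le_pow_right (n := 2) (by omega) (show sInf {m | 1 ≤ m ∧ Localizable (Subdiv (D.gr e) m) 1} ≤ m - 1 by omega)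
      omega
    · omega
  · rw [(D.grModel e).zeta hlow hup (by omega)]
    omega

end sub

section inst

theorem TD.mono {U B : Type} {D : Bip U B} {n : ℕ} {S : Set B} (h : TD D n S) :
    ∀ {S' : Set B}, S' ⊆ S → TD D n S' := by
  induction h with
  | base S t b1 b2 b3 h1 h2 h3 h12 hS =>
    intro S' hs
    exact TD.base S' t b1 b2 b3 h1 h2 h3 h12 fun b hb => hS b (hs hb)
  | split n S u _ _ ih1 ih2 =>
    intro S' hs
    exact TD.split n S' u (ih1 fun b hb => ⟨hs hb.1, hb.2⟩) (ih2 fun b hb => ⟨hs hb.1, hb.2⟩)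

theorem Bip.Resolves.card {U B : Type} [Finite B] {D : Bip U B} {Q : Finset (U ⊕ B)}
    (h : D.Resolves Q) : Nat.card B ≤ 2 ^ Q.card := by
  classical
  have : Fintype B := Fintype.ofFinite B
  rw [Nat.card_eq_fintype_card, ← Finset.card_powerset, ← Finset.card_univ]
  refine Finset.card_le_card_of_injOn (fun b => Q.filter fun q => D.chi q b) ?_ ?_
  · intro b _
    exact Finset.mem_coe.2 (Finset.mem_powerset.2 (Finset.filter_subset _ _))
  · intro b1 _ b2 _ he
    by_contra hne
    obtain ⟨q, hq, hn⟩ := h b1 b2 hne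
    apply hn
    have := congrArg (fun s => q ∈ s) he
    simpa [hq] using this

/-- the instance for `m = 3` -/
def D3 : Bip (Fin 2 ⊕ Fin 5) (Option (Fin 2 → Bool)) where
  R u b := match u, b with
    | Sum.inl i, some f => f i = true
    | _, _ => True
  bs := none
  hbs u := by rcases u with i | i <;> trivial
  A := Set.range Sum.inr
  hA := by
    rintro _ ⟨a, rfl⟩ b
    trivial
  a0 := Sum.inr 0
  ha0 := ⟨0, rfl⟩

theorem D3_CD : CD D3 2 (Set.univ \ {D3.bs}) := by
  have key : ∀ S : Set (Option (Fin 2 → Bool)), (∀ b1 ∈ S, ∀ b2 ∈ S, ∀ f1 f2, b1 = some f1 →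
      b2 = some f2 → f1 0 = f2 0 ∧ f1 1 = f2 1) → none ∉ S → CD D3 0 S := by
    intro S hS hn
    refine CD.zero _ _ ?_
    intro b1 h1 b2 h2
    rcases b1 with _ | f1
    · exact absurd h1 hn
    rcases b2 with _ | f2
    · exact absurd h2 hn
    obtain ⟨e0, e1⟩ := hS _ h1 _ h2 f1 f2 rfl rfl
    congr 1
    funext i
    fin_cases i
    · exact e0
    · exact e1
  have r : ∀ i f, D3.R (Sum.inl i) (some f) ↔ f i = true := fun i f => Iff.rfl
  refine CD.split 1 _ (Sum.inl 0) (CD.split 0 _ (Sum.inl 1) ?_ ?_) (CD.split 0 _ (Sum.inl 1) ?_ ?_)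
  all_goals
    refine key _ ?_ ?_
    · rintro b1 ⟨⟨h1, h2⟩, h3⟩ b2 ⟨⟨h4, h5⟩, h6⟩ f1 f2 rfl rfl
      rw [r] at h2 h3 h5 h6
      simp_all
    · rintro ⟨⟨⟨_, h⟩, _⟩, _⟩
      exact h rfl

theorem case3 : ∃ (n : ℕ) (G : SimpleGraph (Fin n)),
    G.Connected ∧ subdivNum G = 3 ∧ locNum G = 2 ^ (3 - 1) := by
  have hc : Nat.card (Option (Fin 2 → Bool)) = 5 := by
    rw [Nat.card_eq_fintype_card]; rfl
  refine D3.final 3 le_rfl (Or.inl D3_CD) ?_ ?_ ?_ ?_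
  · rw [hc]
    norm_num
  · intro Q hQ
    have := hQ.card
    rw [hc] at this
    norm_num
    by_contra hlt
    have := Nat.pow_le_pow_right (n := 2) (by omega) (show Q.card ≤ 2 by omega)
    omega
  · refine ⟨{Sum.inl (Sum.inl 0), Sum.inl (Sum.inl 1), Sum.inr none}, ?_, by decide⟩
    intro b1 b2 hne
    by_contra hcon
    push Not at hcon
    have e0 := hcon (Sum.inl (Sum.inl 0)) (by simp)
    have e1 := hcon (Sum.inl (Sum.inl 1)) (by simp)
    have e2 := hcon (Sum.inr none) (by simp)
    rcases b1 with _ | f1 <;> rcases b2 with _ | f2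
    · exact hne rfl
    · simp [Bip.chi] at e2
    · simp [Bip.chi] at e2
    · apply hne
      have e0 : f1 0 = f2 0 := by simpa [Bip.chi, D3] using e0
      have e1 : f1 1 = f2 1 := by simpa [Bip.chi, D3] using e1
      congr 1
      funext i
      fin_cases i
      · exact e0
      · exact e1
  · show 2 ^ (3 - 1) + 1 ≤ (Set.range Sum.inr : Set (Fin 2 ⊕ Fin 5)).ncard
    rw [← Set.image_univ, Set.ncard_image_of_injective _ Sum.inr_injective, Set.ncard_univ]
    simp

variable {d m N : ℕ}

/-- the relation of the instances for `m ≥ 4` -/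
def R4 (code : (Fin d → Bool) × Fin 3 → Fin m → Bool) (F : Finset (Fin m × ((Fin d → Bool) × Fin 3))) :
    Fin d ⊕ (Fin d → Bool) ⊕ Fin m ⊕ Fin (N + 1) → Option ((Fin d → Bool) × Fin 3) → Prop
  | _, none => True
  | Sum.inl i, some c => c.1 i = true
  | Sum.inr (Sum.inl p), some c => c.1 = p ∧ c.2 ≠ 2
  | Sum.inr (Sum.inr (Sum.inl e)), some c => (e, c) ∈ F → code c e = true
  | Sum.inr (Sum.inr (Sum.inr _)), some _ => True

/-- the instances for `m ≥ 4` -/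
def D4 (N : ℕ) (code : (Fin d → Bool) × Fin 3 → Fin m → Bool)
    (F : Finset (Fin m × ((Fin d → Bool) × Fin 3))) :
    Bip (Fin d ⊕ (Fin d → Bool) ⊕ Fin m ⊕ Fin (N + 1)) (Option ((Fin d → Bool) × Fin 3)) where
  R := R4 code F
  bs := none
  hbs u := by simp [R4]
  A := Set.range (fun a => Sum.inr (Sum.inr (Sum.inr a)))
  hA := by
    rintro _ ⟨a, rfl⟩ b
    rcases b with _ | c <;> simp [R4]
  a0 := Sum.inr (Sum.inr (Sum.inr 0))
  ha0 := ⟨0, rfl⟩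

theorem D4_TD (code : (Fin d → Bool) × Fin 3 → Fin m → Bool)
    (F : Finset (Fin m × ((Fin d → Bool) × Fin 3))) :
    TD (D4 N code F) d (Set.univ \ {(D4 N code F).bs}) := by
  have key : ∀ n ≤ d, ∀ p0 : Fin d → Bool, TD (D4 N code F) n
      {b | ∃ p j, b = some (p, j) ∧ ∀ i : Fin d, n ≤ i → p i = p0 i} := by
    intro n
    induction n with
    | zero =>
      intro _ p0
      refine TD.base _ (Sum.inr (Sum.inl p0)) (some (p0, 0)) (some (p0, 1)) (some (p0, 2))
        ?_ ?_ ?_ ?_ ?_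
      · simp [D4, R4]
      · simp [D4, R4]
      · simp [D4, R4]
      · simp
      · rintro b ⟨p, j, rfl, hp⟩
        obtain rfl : p = p0 := by
          funext i; exact hp i (Nat.zero_le _)
        fin_cases j <;> simp
    | succ n ih =>
      intro hn p0
      refine TD.split n _ (Sum.inl ⟨n, hn⟩)
        ((ih (by omega) (Function.update p0 ⟨n, hn⟩ true)).mono ?_)
        ((ih (by omega) (Function.update p0 ⟨n, hn⟩ false)).mono ?_)
      · rintro b ⟨⟨p, j, rfl, hp⟩, hb⟩
        refine ⟨p, j, rfl, ?_⟩
        intro i hi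
        have hb : p ⟨n, hn⟩ = true := hb
        by_cases h : i = ⟨n, hn⟩
        · subst h; simpa using hb
        · rw [Function.update_of_ne h]
          refine hp i ?_
          have : (i : ℕ) ≠ n := fun h' => h (Fin.ext h')
          omega
      · rintro b ⟨⟨p, j, rfl, hp⟩, hb⟩
        refine ⟨p, j, rfl, ?_⟩
        intro i hi
        have hb : ¬ p ⟨n, hn⟩ = true := hb
        by_cases h : i = ⟨n, hn⟩
        · subst h; simpa using hb
        · rw [Function.update_of_ne h]
          refine hp i ?_
          have : (i : ℕ) ≠ n := fun h' => h (Fin.ext h')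
          omega
  refine (key d le_rfl (fun _ => true)).mono ?_
  rintro b ⟨_, hb⟩
  rcases b with _ | ⟨p, j⟩
  · exact absurd rfl hb
  · exact ⟨p, j, rfl, fun i hi => absurd i.2 (by omega)⟩

/-- least size of a resolving set -/
noncomputable def Bip.dim {U B : Type} (D : Bip U B) : ℕ :=
  sInf {n | ∃ Q, D.Resolves Q ∧ Q.card = n}

theorem Bip.dim_le {U B : Type} {D : Bip U B} {Q : Finset (U ⊕ B)} (h : D.Resolves Q) :
    D.dim ≤ Q.card := Nat.sInf_le ⟨Q, h, rfl⟩

theorem Bip.exists_dim {U B : Type} [Finite U] [Finite B] (D : Bip U B) :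
    ∃ Q, D.Resolves Q ∧ Q.card = D.dim := by
  have : Fintype B := Fintype.ofFinite B
  have : Fintype U := Fintype.ofFinite U
  have h : D.Resolves Finset.univ := by
    intro b1 b2 hne
    refine ⟨Sum.inr b1, Finset.mem_univ _, ?_⟩
    simp only [Bip.chi, true_iff]
    exact hne.symm
  exact Nat.sInf_mem (s := {n | ∃ Q, D.Resolves Q ∧ Q.card = n}) ⟨_, Finset.univ, h, rfl⟩

theorem D4_step (code : (Fin d → Bool) × Fin 3 → Fin m → Bool)
    (F : Finset (Fin m × ((Fin d → Bool) × Fin 3))) (a : Fin m × ((Fin d → Bool) × Fin 3)) :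
    (D4 N code F).dim ≤ (D4 N code (insert a F)).dim + 1 := by
  classical
  obtain ⟨Q, hQ, hc⟩ := (D4 N code (insert a F)).exists_dim
  have hres : (D4 N code F).Resolves (insert (Sum.inr (some a.2)) Q) := by
    intro b1 b2 hne
    by_cases h1 : b1 = some a.2
    · refine ⟨Sum.inr (some a.2), by simp, ?_⟩
      simp only [Bip.chi]
      intro h
      exact hne (h1.trans (h.1 h1).symm)
    by_cases h2 : b2 = some a.2
    · refine ⟨Sum.inr (some a.2), by simp, ?_⟩
      simp only [Bip.chi]
      intro h
      exact h1 (h.2 h2)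
    obtain ⟨q, hq, hn⟩ := hQ b1 b2 hne
    refine ⟨q, by simp [hq], ?_⟩
    have same : ∀ b, b ≠ some a.2 → ((D4 N code F).chi q b ↔ (D4 N code (insert a F)).chi q b) := by
      intro b hb
      rcases q with (i | p | e | x) | b' <;> rcases b with _ | c <;> simp only [Bip.chi, D4, R4]
      have : (e, c) ≠ a := by
        rintro rfl
        exact hb rfl
      simp [this]
    rw [same b1 h1, same b2 h2]
    exact hn
  refine (Bip.dim_le hres).trans ?_
  rw [← hc]
  exact Finset.card_insert_le _ _

theorem D4_univ (code : (Fin d → Bool) × Fin 3 → Fin m → Bool) (hinj : Function.Injective code)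
    (hf : ∀ c, ∃ e, code c e = false) : (D4 N code Finset.univ).dim ≤ m := by
  classical
  have hres : (D4 N code Finset.univ).Resolves
      (Finset.univ.image fun e : Fin m => Sum.inl (Sum.inr (Sum.inr (Sum.inl e)))) := by
    intro b1 b2 hne
    by_contra hcon
    push Not at hcon
    have hcon : ∀ e : Fin m, R4 (N := N) code Finset.univ (Sum.inr (Sum.inr (Sum.inl e))) b1 ↔
        R4 (N := N) code Finset.univ (Sum.inr (Sum.inr (Sum.inl e))) b2 := by
      intro e
      have := hcon _ (Finset.mem_image_of_mem _ (Finset.mem_univ e))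
      simp only [Bip.chi, D4] at this
      tauto
    rcases b1 with _ | c1 <;> rcases b2 with _ | c2
    · exact hne rfl
    · obtain ⟨e, he⟩ := hf c2
      have := hcon e
      simp [R4, he] at this
    · obtain ⟨e, he⟩ := hf c1
      have := hcon e
      simp [R4, he] at this
    · apply hne
      congr 1
      apply hinj
      funext e
      have := hcon e
      simp only [R4, Finset.mem_univ, true_imp_iff] at this
      exact Bool.eq_iff_iff.2 this
  refine (Bip.dim_le hres).trans (Finset.card_image_le.trans (by simp))

theorem D4_empty (code : (Fin d → Bool) × Fin 3 → Fin m → Bool) :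
    2 ^ d * 2 ≤ (D4 N code ∅).dim := by
  classical
  obtain ⟨Q, hQ, hc⟩ := (D4 N code ∅).exists_dim
  rw [← hc]
  let own : (Fin d ⊕ (Fin d → Bool) ⊕ Fin m ⊕ Fin (N + 1)) ⊕ Option ((Fin d → Bool) × Fin 3) →
      Option (Fin d → Bool) := fun q => match q with
    | Sum.inl (Sum.inr (Sum.inl p)) => some p
    | Sum.inr (some (p, _)) => some p
    | _ => none
  have sep : ∀ q p j j', ¬ ((D4 N code ∅).chi q (some (p, j)) ↔ (D4 N code ∅).chi q (some (p, j'))) →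
      own q = some p := by
    intro q p j j' h
    rcases q with (i | p' | e | x) | (_ | ⟨p', j''⟩)
    · exact absurd Iff.rfl h
    · by_cases hp : p = p'
      · subst hp; rfl
      · simp [Bip.chi, D4, R4, hp] at h
    · simp [Bip.chi, D4, R4] at h
    · exact absurd Iff.rfl h
    · simp [Bip.chi] at h
    · by_cases hp : p = p'
      · subst hp; rfl
      · simp [Bip.chi, hp] at h
  have two : ∀ p : Fin d → Bool, ∃ q1 ∈ Q, ∃ q2 ∈ Q, q1 ≠ q2 ∧ own q1 = some p ∧ own q2 = some p := by
    intro p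
    obtain ⟨q1, hq1, h1⟩ := hQ (some (p, 0)) (some (p, 1)) (by simp)
    have o1 := sep _ _ _ _ h1
    obtain ⟨q2, hq2, h2⟩ := hQ (some (p, 0)) (some (p, 2)) (by simp)
    have o2 := sep _ _ _ _ h2
    obtain ⟨q3, hq3, h3⟩ := hQ (some (p, 1)) (some (p, 2)) (by simp)
    have o3 := sep _ _ _ _ h3
    by_cases e2 : q1 = q2
    · by_cases e3 : q1 = q3
      · exfalso
        subst e2 e3
        by_cases a : (D4 N code ∅).chi q1 (some (p, 0)) <;>
        by_cases b : (D4 N code ∅).chi q1 (some (p, 1)) <;>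
        by_cases c : (D4 N code ∅).chi q1 (some (p, 2)) <;> tauto
      · exact ⟨q1, hq1, q3, hq3, e3, o1, o3⟩
    · exact ⟨q1, hq1, q2, hq2, e2, o1, o2⟩
  choose q1 h1 q2 h2 hne o1 o2 using two
  have hcard : 2 ^ d * 2 = (Finset.univ : Finset ((Fin d → Bool) × Bool)).card := by
    simp
  rw [hcard]
  refine Finset.card_le_card_of_injOn (fun x => if x.2 then q1 x.1 else q2 x.1) ?_ ?_
  · rintro ⟨p, b⟩ _
    cases b
    · simpa using h2 p
    · simpa using h1 p
  · rintro ⟨p, b⟩ _ ⟨p', b'⟩ _ he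
    have hp : p = p' := by
      have := congrArg own he
      cases b <;> cases b' <;> simp [o1, o2] at this <;> exact this
    subst hp
    cases b <;> cases b' <;> simp at he
    · rfl
    · exact absurd he.symm (hne p)
    · exact absurd he (hne p)
    · rfl

theorem exists_code (h : 2 ≤ m) (hd : d = m - 2) : ∃ code : (Fin d → Bool) × Fin 3 → Fin m → Bool,
    Function.Injective code ∧ ∀ c, ∃ e, code c e = false := by
  have hcard : Fintype.card (Option ((Fin d → Bool) × Fin 3)) ≤ Fintype.card (Fin m → Bool) := by
    simp
    have : 2 ^ m = 2 ^ d * 4 := by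
      rw [show (4 : ℕ) = 2 ^ 2 by norm_num, ← pow_add]; congr 1; omega
    have : 0 < 2 ^ d := by positivity
    omega
  obtain ⟨c0⟩ := Function.Embedding.nonempty_of_card_le hcard
  refine ⟨fun c e => c0 (some c) e == c0 none e, ?_, ?_⟩
  · intro c c' he
    have : c0 (some c) = c0 (some c') := by
      funext e
      have := congrFun he e
      revert this
      dsimp only
      cases c0 (some c) e <;> cases c0 (some c') e <;> cases c0 none e <;> simp
    simpa using c0.injective this
  · intro c
    by_contra hcon
    push Not at hcon
    have : c0 (some c) = c0 none := by
      funext e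
      have := hcon e
      simpa using this
    exact absurd (c0.injective this) (by simp)

theorem case4 (m : ℕ) (hm : 4 ≤ m) : ∃ (n : ℕ) (G : SimpleGraph (Fin n)),
    G.Connected ∧ subdivNum G = m ∧ locNum G = 2 ^ (m - 1) := by
  classical
  obtain ⟨d, hd⟩ : ∃ d, d = m - 2 := ⟨_, rfl⟩
  obtain ⟨code, hinj, hf⟩ := exists_code (by omega) hd
  have e1 : 2 ^ (m - 1) = 2 ^ d * 2 := by
    rw [← pow_succ]; congr 1; omega
  have hT : m ≤ 2 ^ (m - 1) - 1 := by
    have h1 : d < 2 ^ d := Nat.lt_two_pow_self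
    omega
  set N := 2 ^ (m - 1) with hN
  have ivt : ∀ F : Finset (Fin m × ((Fin d → Bool) × Fin 3)), (D4 N code F).dim ≤ N - 1 →
      ∃ F, (D4 N code F).dim = N - 1 := by
    intro F
    induction F using Finset.induction_on with
    | empty =>
      intro h
      have := D4_empty (N := N) code
      exact ⟨∅, by omega⟩
    | insert a F _ ih =>
      intro h
      by_cases h' : (D4 N code F).dim ≤ N - 1
      · exact ih h'
      · have := D4_step (N := N) code F a
        exact ⟨insert a F, by omega⟩
  obtain ⟨F, hF⟩ := ivt Finset.univ ((D4_univ code hinj hf).trans hT)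
  refine (D4 N code F).final m (by omega) (Or.inr ⟨hm, ?_⟩) ?_ ?_ ?_ ?_
  · rw [← hd]
    exact D4_TD code F
  · rw [Nat.card_eq_fintype_card]
    simp
    omega
  · intro Q hQ
    rw [← hN, ← hF]
    exact Bip.dim_le hQ
  · obtain ⟨Q, hQ, hc⟩ := (D4 N code F).exists_dim
    exact ⟨Q, hQ, by omega⟩
  · show _ ≤ (Set.range _).ncard
    rw [← Set.image_univ, Set.ncard_image_of_injective, Set.ncard_univ]
    · simp
      omega
    · intro a b h
      simpa using h

end inst

end RobLoc
/-- For every `m ≥ 3` there is a finite connected graph `G` with `η(G) = m`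
and `ζ(G) = 2^(m-1)`; in particular `ζ` is not `O(η)`. -/
theorem exists_graph_subdivNum_eq_and_locNum_eq :
    (∀ m : ℕ, 3 ≤ m → ∃ (n : ℕ) (G : SimpleGraph (Fin n)),
      G.Connected ∧ subdivNum G = m ∧ locNum G = 2 ^ (m - 1)) ∧
    ¬ ∃ C : ℕ, 0 < C ∧ ∀ (n : ℕ) (G : SimpleGraph (Fin n)),
      G.Connected → 2 ≤ n → locNum G ≤ C * subdivNum G := by
  have main : ∀ m : ℕ, 3 ≤ m → ∃ (n : ℕ) (G : SimpleGraph (Fin n)),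
      G.Connected ∧ subdivNum G = m ∧ locNum G = 2 ^ (m - 1) := by
    intro m hm
    by_cases h : m = 3
    · subst h; exact RobLoc.case3
    · exact RobLoc.case4 m (by omega)
  refine ⟨main, ?_⟩
  rintro ⟨C, hC, hall⟩
  obtain ⟨n, G, hconn, h1, h2⟩ := main (4 * C + 1) (by omega)
  have hn : 2 ≤ n := by
    by_contra hlt
    have hss : Subsingleton (Fin n) := by
      rw [Fin.subsingleton_iff_le_one]; omega
    have hloc : Localizable G 0 := by
      apply RobLoc.Win.localizable
      refine RobLoc.Win.step _ Fin.elim0 ?_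
      intro w _ hns
      exact absurd (Set.subsingleton_of_subsingleton) hns
    have : locNum G ≤ 0 := Nat.sInf_le hloc
    have : 0 < 2 ^ (4 * C + 1 - 1) := by positivity
    omega
  have h3 := hall n G hconn hn
  rw [h1, h2] at h3
  have h4 : 2 * C < 2 ^ (2 * C) := Nat.lt_two_pow_self
  have h5 : 2 ^ (4 * C + 1 - 1) = 2 ^ (2 * C) * 2 ^ (2 * C) := by
    rw [← pow_add]; congr 1; omega
  rw [h5] at h3
  have h6 : (2 * C + 1) * (2 * C + 1) ≤ 2 ^ (2 * C) * 2 ^ (2 * C) := Nat.mul_le_mul h4 h4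
  nlinarith
end
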